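/- arXiv:1011.3779 — 3 statements merged into one kernel-verified Lean document; each statement's English description precedes it below -/
import Mathlib

section
/- Let r ≥ 1, let N ≥ 2r, and let M be a nondegenerate 2-dimensional linear subspace of the space of skew-symmetric (N+1)×(N+1) complex matrices such that every nonzero matrix in M has rank 2r. Set h = N+1−2r. Then there exist a partition r = r₁ + ⋯ + r_h with r₁ ≥ ⋯ ≥ r_h ≥ 1, an invertible complex (N+1)×(N+1) matrix S, and a basis (A, B) of M such that S A Sᵀ = F_λ(1,0) and S B Sᵀ = F_λ(0,1), where F_λ is the standard pencil associated to the partition. -/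
open Matrix

open scoped Classical in
/-- Partial sums of the partition: `partialSum rpart k = r₁ + ⋯ + r_k`. -/
noncomputable def partialSum {h : ℕ} (rpart : Fin h → ℕ) (k : ℕ) : ℕ :=
  ∑ j ∈ Finset.range k, if hj : j < h then rpart ⟨j, hj⟩ else 0

open scoped Classical in
/-- The block-diagonal matrix `F̄(a,b)` with blocks `U_{r₁}(a,b), …, U_{r_h}(a,b)`,
where `U_{r_i}(a,b)` is the `r_i × (r_i+1)` matrix with `a` on the main diagonal and
`b` on the superdiagonal. -/
noncomputable def Fbar {h : ℕ} (rpart : Fin h → ℕ) (r m : ℕ) (a b : ℂ) :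
    Matrix (Fin r) (Fin m) ℂ :=
  Matrix.of fun s t =>
    if ∃ i : Fin h, partialSum rpart i ≤ s.val ∧ s.val < partialSum rpart (i.val + 1) ∧
        t.val = s.val + i.val then a
    else if ∃ i : Fin h, partialSum rpart i ≤ s.val ∧ s.val < partialSum rpart (i.val + 1) ∧
        t.val = s.val + i.val + 1 then b
    else 0

/-- The standard skew-symmetric pencil `F_λ(a,b)` of size `(2r+h)×(2r+h)` associated to a
partition `r = r₁ + ⋯ + r_h`, with block form `[[0, F̄(a,b)], [−F̄(a,b)ᵀ, 0]]`. -/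
noncomputable def Fpencil {h : ℕ} (rpart : Fin h → ℕ) (r : ℕ) (a b : ℂ) :
    Matrix (Fin (2*r + h)) (Fin (2*r + h)) ℂ :=
  Matrix.reindex (finSumFinEquiv.trans (finCongr (by omega)))
    (finSumFinEquiv.trans (finCongr (by omega)))
    (Matrix.fromBlocks 0 (Fbar rpart r (r + h) a b) (-(Fbar rpart r (r + h) a b)ᵀ) 0)

section Aux
open Module

/-- Kronecker normal form for pencils that are everywhere surjective. -/
theorem chain_aux : ∀ (n : ℕ) (K W : Type) [AddCommGroup K] [Module ℂ K] [FiniteDimensional ℂ K]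
    [AddCommGroup W] [Module ℂ W] [FiniteDimensional ℂ W] (A B : K →ₗ[ℂ] W),
    finrank ℂ W = n →
    (∀ a b : ℂ, (a ≠ 0 ∨ b ≠ 0) → Function.Surjective (a • A + b • B)) →
    ∃ (ι : Type) (_ : Fintype ι) (ρ : ι → ℕ) (e : Basis (Σ i, Fin (ρ i + 1)) ℂ K)
      (w : Basis (Σ i, Fin (ρ i)) ℂ W),
      (∀ i (s : Fin (ρ i)), A (e ⟨i, s.castSucc⟩) = w ⟨i, s⟩) ∧
      (∀ i, A (e ⟨i, Fin.last _⟩) = 0) ∧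
      (∀ i (s : Fin (ρ i)), B (e ⟨i, s.succ⟩) = w ⟨i, s⟩) ∧
      (∀ i, B (e ⟨i, 0⟩) = 0) := by
  intro n
  induction n using Nat.strong_induction_on with
  | _ n ih =>
  intro K W _ _ _ _ _ _ A B hn hs
  rcases Nat.eq_zero_or_pos n with h0 | hpos
  · subst h0
    have hW : Subsingleton W := finrank_zero_iff.mp hn
    have : IsEmpty (Σ i : Fin (finrank ℂ K), Fin ((fun _ => 0) i)) := ⟨fun x => x.2.elim0⟩
    refine ⟨Fin (finrank ℂ K), inferInstance, fun _ => 0,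
      (finBasis ℂ K).reindex (Equiv.sigmaUnique (Fin (finrank ℂ K)) (fun _ => Fin 1)).symm, Basis.empty W,
      fun i s => Subsingleton.elim _ _, fun i => Subsingleton.elim _ _,
      fun i s => Subsingleton.elim _ _, fun i => Subsingleton.elim _ _⟩
  -- the reflected module
  set D : K →ₗ[ℂ] W × W := B.prod (-A) with hD
  have hker : ∀ x, x ∈ LinearMap.ker D ↔ A x = 0 ∧ B x = 0 := by
    intro x; simp [hD, and_comm]
  let A' : W →ₗ[ℂ] (W × W) ⧸ LinearMap.range D := (LinearMap.range D).mkQ ∘ₗ LinearMap.inl ℂ W W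
  let B' : W →ₗ[ℂ] (W × W) ⧸ LinearMap.range D := (LinearMap.range D).mkQ ∘ₗ LinearMap.inr ℂ W W
  have hA'B' : ∀ p q : W, A' q = B' p → ∃ x, A x = p ∧ B x = q := by
    intro p q h
    have h2 : ((q, 0) : W × W) - (0, p) ∈ LinearMap.range D := by
      rw [← Submodule.Quotient.eq]; exact h
    obtain ⟨x, hx⟩ := h2
    simp [hD] at hx
    exact ⟨x, hx.2, hx.1⟩
  have hdC : finrank ℂ ((W × W) ⧸ LinearMap.range D) + finrank ℂ K
      = 2 * finrank ℂ W + finrank ℂ (LinearMap.ker D) := by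
    have h1 := (LinearMap.range D).finrank_quotient_add_finrank
    have h2 := D.finrank_range_add_finrank_ker
    rw [finrank_prod] at h1
    omega
  have hAs : Function.Surjective A := by simpa using hs 1 0 (by simp)
  have hBs : Function.Surjective B := by simpa using hs 0 1 (by simp)
  have hAk := A.finrank_range_add_finrank_ker
  have hBk := B.finrank_range_add_finrank_ker
  rw [LinearMap.range_eq_top.mpr hAs, finrank_top] at hAk
  rw [LinearMap.range_eq_top.mpr hBs, finrank_top] at hBk
  have hlt : finrank ℂ ((W × W) ⧸ LinearMap.range D) < n := by
    have hle : LinearMap.ker D ≤ LinearMap.ker A := fun x hx => ((hker x).1 hx).1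
    have hleB : LinearMap.ker D ≤ LinearMap.ker B := fun x hx => ((hker x).1 hx).2
    by_contra hcon
    have hfl := Submodule.finrank_mono hle
    have hEA := Submodule.eq_of_le_of_finrank_eq hle (by omega)
    have hEB := Submodule.eq_of_le_of_finrank_eq hleB (by omega)
    -- a section of A and an eigenvector
    obtain ⟨g, hg⟩ := A.exists_rightInverse_of_surjective (LinearMap.range_eq_top.mpr hAs)
    have : Nontrivial W := finrank_pos_iff.mp (by omega : 0 < finrank ℂ W)
    obtain ⟨μ, hμ⟩ := Module.End.exists_eigenvalue (B ∘ₗ g)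
    obtain ⟨v, hv⟩ := hμ.exists_hasEigenvector
    have hv1 : B (g v) = μ • v := hv.apply_eq_smul
    have hv2 : A (g v) = v := LinearMap.congr_fun hg v
    have hk : g v ∈ LinearMap.ker ((-μ) • A + (1:ℂ) • B) := by
      simp [hv1, hv2]
    have hsur := hs (-μ) 1 (by simp)
    have hSk := ((-μ) • A + (1:ℂ) • B).finrank_range_add_finrank_ker
    rw [LinearMap.range_eq_top.mpr hsur, finrank_top] at hSk
    have hleS : LinearMap.ker D ≤ LinearMap.ker ((-μ) • A + (1:ℂ) • B) := fun x hx => by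
      have := (hker x).1 hx
      simp [this]
    have hES := Submodule.eq_of_le_of_finrank_eq hleS (by omega)
    rw [← hES, hEA, LinearMap.mem_ker, hv2] at hk
    exact hv.2 hk
  obtain ⟨ι, hι, σ, w, c, h1, h2, h3, h4⟩ := ih _ hlt W _ A' B' rfl (by
    intro a b hab y
    obtain ⟨⟨w1, w2⟩, rfl⟩ := Submodule.mkQ_surjective _ y
    obtain ⟨x, hx⟩ := hs a b hab (b • w1 - a • w2)
    simp only [LinearMap.add_apply, LinearMap.smul_apply] at hx
    have key : ∃ v, ((a • v, b • v) : W × W) - (w1, w2) ∈ LinearMap.range D := by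
      rcases hab with ha | hb
      · refine ⟨a⁻¹ • (w1 - B x), -x, ?_⟩
        have : A x = a⁻¹ • (b • w1 - a • w2 - b • B x) := by
          rw [← hx]; simp [smul_smul, ha]
        have e1 : D (-x) = (- B x, A x) := by simp [hD]
        rw [e1, this]
        refine Prod.ext ?_ ?_
        · simp [smul_smul, ha]
        · simp only [Prod.mk_sub_mk, smul_smul, smul_sub, inv_mul_cancel₀ ha, one_smul, mul_comm b]
          abel
      · refine ⟨b⁻¹ • (w2 + A x), -x, ?_⟩
        have : B x = b⁻¹ • (b • w1 - a • w2 - a • A x) := by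
          rw [← hx]; simp [smul_smul, hb]
        have e1 : D (-x) = (- B x, A x) := by simp [hD]
        rw [e1, this]
        refine Prod.ext ?_ ?_
        · simp only [Prod.mk_sub_mk, smul_smul, smul_sub, smul_add, inv_mul_cancel₀ hb, one_smul, mul_comm a]
          abel
        · simp [smul_smul, hb]
    obtain ⟨v, hv⟩ := key
    refine ⟨v, ?_⟩
    rw [← Submodule.Quotient.eq] at hv
    rw [Submodule.mkQ_apply, ← hv]
    simp only [A', B', LinearMap.add_apply, LinearMap.smul_apply, LinearMap.comp_apply,
      Submodule.mkQ_apply, ← Submodule.Quotient.mk_smul, ← Submodule.Quotient.mk_add]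
    simp)
  -- lift the chains
  have hch : ∀ i (t : Fin (σ i + 1 + 1)), ∃ x,
      A x = (Fin.snoc (fun s => w ⟨i, s⟩) 0 : Fin (σ i + 1 + 1) → W) t ∧
      B x = (Fin.cons 0 (fun s => w ⟨i, s⟩) : Fin (σ i + 1 + 1) → W) t := by
    intro i t
    apply hA'B'
    refine Fin.cases ?_ (fun s => ?_) t
    · rw [Fin.cons_zero, ← Fin.castSucc_zero, Fin.snoc_castSucc, h4, map_zero]
    · rw [Fin.cons_succ]
      refine Fin.lastCases ?_ (fun u => ?_) s
      · rw [h2, Fin.succ_last, Fin.snoc_last, map_zero]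
      · rw [h1, Fin.succ_castSucc, Fin.snoc_castSucc, h3]
  choose x hxA hxB using hch
  let k0 := finrank ℂ (LinearMap.ker D)
  let bk : Basis (Fin k0) ℂ (LinearMap.ker D) := finBasis ℂ _
  let ρ : ι ⊕ Fin k0 → ℕ := Sum.elim (fun i => σ i + 1) (fun _ => 0)
  let ef : (Σ i, Fin (ρ i + 1)) → K := fun y => match y with
    | ⟨Sum.inl i, t⟩ => x i t
    | ⟨Sum.inr j, _⟩ => (bk j : K)
  have hbkA : ∀ j, A (bk j : K) = 0 := fun j => ((hker _).1 (bk j).2).1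
  have hbkB : ∀ j, B (bk j : K) = 0 := fun j => ((hker _).1 (bk j).2).2
  have hli : LinearIndependent ℂ ef := by
    rw [Fintype.linearIndependent_iff]
    intro g hg
    rw [Fintype.sum_sigma, Fintype.sum_sum_type] at hg
    change ∑ i, ∑ t : Fin (σ i + 1 + 1), g ⟨Sum.inl i, t⟩ • x i t
      + ∑ j : Fin k0, ∑ t : Fin (0 + 1), g ⟨Sum.inr j, t⟩ • (bk j : K) = 0 at hg
    have hgA := congrArg A hg
    have hgB := congrArg B hg
    simp only [map_add, map_sum, map_smul, hbkA, hbkB, smul_zero, Finset.sum_const_zero, add_zero,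
      map_zero, hxA, hxB] at hgA hgB
    simp only [Fin.sum_univ_castSucc (n := _ + 1), Fin.snoc_castSucc, Fin.snoc_last, smul_zero,
      add_zero] at hgA
    simp only [Fin.sum_univ_succ (n := _ + 1), Fin.cons_succ, Fin.cons_zero, smul_zero,
      zero_add] at hgB
    have hw := Fintype.linearIndependent_iff.1 w.linearIndependent
    have hA0 := hw (fun y => g ⟨Sum.inl y.1, y.2.castSucc⟩) (by
      rw [Fintype.sum_sigma]; exact hgA)
    have hB0 := hw (fun y => g ⟨Sum.inl y.1, y.2.succ⟩) (by
      rw [Fintype.sum_sigma]; exact hgB)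
    have hl : ∀ i (t : Fin (σ i + 1 + 1)), g ⟨Sum.inl i, t⟩ = 0 := by
      intro i t
      refine Fin.cases ?_ (fun s => ?_) t
      · exact hA0 ⟨i, 0⟩
      · exact hB0 ⟨i, s⟩
    simp only [hl, zero_smul, Finset.sum_const_zero, zero_add] at hg
    have hr := Fintype.linearIndependent_iff.1 bk.linearIndependent (fun j => g ⟨Sum.inr j, (0 : Fin (0+1))⟩) (by
      apply Subtype.ext
      simpa using hg)
    rintro ⟨i | j, t⟩
    · exact hl i t
    · have : t = (0 : Fin (0+1)) := Subsingleton.elim (α := Fin 1) _ _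
      subst this
      exact hr j
  have hcW : ∑ i, (σ i + 1) = finrank ℂ W := by
    rw [finrank_eq_card_basis w]; simp
  have hcC : ∑ i, σ i = finrank ℂ ((W × W) ⧸ LinearMap.range D) := by
    rw [finrank_eq_card_basis c]; simp
  have hcard : Fintype.card (Σ i, Fin (ρ i + 1)) = finrank ℂ K := by
    have hc1 : Fintype.card (Σ i, Fin (ρ i + 1)) = ∑ i, (ρ i + 1) := by simp
    rw [hc1, Fintype.sum_sum_type]
    change ∑ i, (σ i + 1 + 1) + ∑ j : Fin k0, (0 + 1) = _
    simp only [Finset.sum_add_distrib, Finset.sum_const, Finset.card_univ, Fintype.card_fin,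
      smul_eq_mul, mul_one, mul_zero, zero_add] at hcW ⊢
    have : k0 = finrank ℂ (LinearMap.ker D) := rfl
    omega
  let eqv : (Σ i, Fin (σ i + 1)) ≃ (Σ i, Fin (ρ i)) :=
    { toFun := fun y => ⟨Sum.inl y.1, y.2⟩
      invFun := fun y => match y with
        | ⟨Sum.inl i, t⟩ => ⟨i, t⟩
        | ⟨Sum.inr j, t⟩ => @Fin.elim0 _ t
      left_inv := fun y => rfl
      right_inv := fun y => match y with
        | ⟨Sum.inl i, t⟩ => rfl
        | ⟨Sum.inr j, t⟩ => @Fin.elim0 _ t }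
  have : Nonempty (Σ i, Fin (ρ i + 1)) := by
    by_contra hne
    rw [not_nonempty_iff] at hne
    rw [Fintype.card_eq_zero] at hcard
    omega
  refine ⟨ι ⊕ Fin k0, inferInstance, ρ, basisOfLinearIndependentOfCardEqFinrank hli hcard,
    w.reindex eqv, ?_, ?_, ?_, ?_⟩
  · rintro (i | j) s
    · have : (w.reindex eqv) ⟨Sum.inl i, s⟩ = w ⟨i, s⟩ := by
        rw [Basis.reindex_apply]; rfl
      rw [this, coe_basisOfLinearIndependentOfCardEqFinrank]
      refine (hxA i _).trans ?_
      exact Fin.snoc_castSucc (α := fun _ => W) (n := σ i + 1) _ _ s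
    · exact @Fin.elim0 _ s
  · rintro (i | j)
    · rw [coe_basisOfLinearIndependentOfCardEqFinrank]
      refine (hxA i _).trans ?_
      exact Fin.snoc_last (α := fun _ => W) (n := σ i + 1) _ _
    · rw [coe_basisOfLinearIndependentOfCardEqFinrank]
      exact hbkA j
  · rintro (i | j) s
    · have : (w.reindex eqv) ⟨Sum.inl i, s⟩ = w ⟨i, s⟩ := by
        rw [Basis.reindex_apply]; rfl
      rw [this, coe_basisOfLinearIndependentOfCardEqFinrank]
      refine (hxB i _).trans ?_
      exact Fin.cons_succ (α := fun _ => W) (n := σ i + 1) _ _ s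
    · exact @Fin.elim0 _ s
  · rintro (i | j)
    · rw [coe_basisOfLinearIndependentOfCardEqFinrank]
      refine (hxB i _).trans ?_
      exact Fin.cons_zero (α := fun _ => W) (n := σ i + 1) _ _
    · rw [coe_basisOfLinearIndependentOfCardEqFinrank]
      exact hbkB j

/-- Common isotropic subspaces for pencils of alternating forms. -/
theorem isotropic_aux : ∀ (n : ℕ) (V : Type) [AddCommGroup V] [Module ℂ V] [FiniteDimensional ℂ V]
    (A B : V →ₗ[ℂ] V →ₗ[ℂ] ℂ) (h : ℕ), finrank ℂ V = n → (∀ x, A x x = 0) → (∀ x, B x x = 0) →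
    (∃ T : Set ℂ, T.Finite ∧ ∀ t ∉ T, h ≤ finrank ℂ (LinearMap.ker (A + t • B))) →
    ∃ K : Submodule ℂ V, (∀ x ∈ K, ∀ y ∈ K, A x y = 0 ∧ B x y = 0) ∧ n + h ≤ 2 * finrank ℂ K := by
  intro n
  induction n using Nat.strong_induction_on with
  | _ n ih =>
  intro V _ _ _ A B h hn hA hB hT
  obtain ⟨T, hTf, hT⟩ := hT
  have hAs : ∀ x y, A x y = - A y x := by
    intro x y
    have := hA (x + y)
    simp only [map_add, LinearMap.add_apply, hA] at this
    linear_combination this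
  have hBs : ∀ x y, B x y = - B y x := by
    intro x y
    have := hB (x + y)
    simp only [map_add, LinearMap.add_apply, hB] at this
    linear_combination this
  rcases Nat.eq_zero_or_pos n with h0 | hpos
  · subst h0
    obtain ⟨t, ht⟩ := hTf.infinite_compl.nonempty
    have h1 := hT t ht
    have h2 := Submodule.finrank_le (LinearMap.ker (A + t • B))
    refine ⟨⊥, ?_, by omega⟩
    simp
  have hnt : Nontrivial V := finrank_pos_iff.mp (by omega : 0 < finrank ℂ V)
  -- a singular vector
  have hx : ∃ x : V, x ≠ 0 ∧ ∃ (φ : V →ₗ[ℂ] ℂ) (a b : ℂ), A x = a • φ ∧ B x = b • φ := by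
    by_cases hBi : LinearMap.ker B = ⊥
    · have hfr : finrank ℂ V = finrank ℂ (V →ₗ[ℂ] ℂ) := (Subspace.dual_finrank_eq (K := ℂ) (V := V)).symm
      let Be : V ≃ₗ[ℂ] (V →ₗ[ℂ] ℂ) := LinearEquiv.ofInjectiveOfFinrankEq B (LinearMap.ker_eq_bot.mp hBi) hfr
      obtain ⟨μ, hμ⟩ := Module.End.exists_eigenvalue (Be.symm.toLinearMap ∘ₗ A)
      obtain ⟨v, hv⟩ := hμ.exists_hasEigenvector
      have hv1 : Be.symm (A v) = μ • v := hv.apply_eq_smul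
      refine ⟨v, hv.2, B v, μ, 1, ?_, by simp⟩
      have := congrArg Be hv1
      rw [LinearEquiv.apply_symm_apply, map_smul] at this
      exact this
    · obtain ⟨x, hx, hx0⟩ := Submodule.exists_mem_ne_zero_of_ne_bot hBi
      exact ⟨x, hx0, A x, 1, 0, by simp, by simpa using hx⟩
  obtain ⟨x, hx0, φ, a, b, hAx, hBx⟩ := hx
  obtain ⟨ψ, hψ⟩ : ∃ ψ : V →ₗ[ℂ] ℂ, ψ x = 1 := Projective.exists_dual_eq_one ℂ hx0
  -- it is harmless to make `φ` zero when `x` is in the common kernel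
  let H : Submodule ℂ V := LinearMap.ker (A x) ⊓ LinearMap.ker (B x) ⊓ LinearMap.ker ψ
  have hHA : ∀ y ∈ H, A x y = 0 := fun y hy => hy.1.1
  have hHB : ∀ y ∈ H, B x y = 0 := fun y hy => hy.1.2
  have hHψ : ∀ y ∈ H, ψ y = 0 := fun y hy => hy.2
  let A' : H →ₗ[ℂ] H →ₗ[ℂ] ℂ := A.domRestrict₁₂ H H
  let B' : H →ₗ[ℂ] H →ₗ[ℂ] ℂ := B.domRestrict₁₂ H H
  have hxH : x ∉ H := fun hx => by
    have := hHψ x hx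
    rw [hψ] at this; exact one_ne_zero this
  have hHlt : finrank ℂ H < n := by
    rw [← hn]
    exact Submodule.finrank_lt (fun htop => hxH (htop ▸ Submodule.mem_top))
  -- projection to `H`
  have hmem : ∀ (t : ℂ), ∀ z ∈ LinearMap.ker (A + t • B), (A x = 0 ∧ B x = 0 ∨ (A + t • B) x ≠ 0) →
      z - ψ z • x ∈ H := by
    intro t z hz hcase
    have hzx : A x z + t * B x z = 0 := by
      have := LinearMap.congr_fun hz x
      simp only [LinearMap.add_apply, LinearMap.smul_apply, LinearMap.zero_apply, smul_eq_mul] at this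
      rw [hAs x z, hBs x z]; linear_combination -this
    have hAB : A x z = 0 ∧ B x z = 0 := by
      rcases hcase with ⟨h1, h2⟩ | hne
      · simp [h1, h2]
      · have hφz : φ z = 0 := by
          rw [hAx, hBx] at hzx
          simp only [LinearMap.smul_apply, smul_eq_mul] at hzx
          have hab : a + t * b ≠ 0 := by
            intro h0
            apply hne
            rw [LinearMap.add_apply, LinearMap.smul_apply, hAx, hBx, smul_smul, ← add_smul, h0, zero_smul]
          have : (a + t * b) * φ z = 0 := by linear_combination hzx
          exact (mul_eq_zero.1 this).resolve_left hab
        rw [hAx, hBx]; simp [hφz]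
    refine ⟨⟨?_, ?_⟩, ?_⟩
    · simp [hA, hAB.1]
    · simp [hB, hAB.2]
    · simp [hψ]
  have hrad : ∀ (t : ℂ) (z : V), z ∈ LinearMap.ker (A + t • B) → ∀ hz : z - ψ z • x ∈ H,
      (⟨z - ψ z • x, hz⟩ : H) ∈ LinearMap.ker (A' + t • B') := by
    intro t z hz hzH
    rw [LinearMap.mem_ker]
    ext ⟨u, hu⟩
    have := LinearMap.congr_fun hz u
    simp only [LinearMap.add_apply, LinearMap.smul_apply, LinearMap.zero_apply, smul_eq_mul] at this
    simp [A', B', LinearMap.domRestrict₁₂_apply, hHA u hu, hHB u hu, this]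
  have hproj : ∀ t : ℂ, (A x = 0 ∧ B x = 0 ∨ (A + t • B) x ≠ 0) →
      ∃ P : LinearMap.ker (A + t • B) →ₗ[ℂ] LinearMap.ker (A' + t • B'),
        ∀ z, P z = 0 → (z : V) = ψ z • x := by
    intro t hcase
    let P0 : V →ₗ[ℂ] V := LinearMap.id - ψ.smulRight x
    have hP0 : ∀ z, P0 z = z - ψ z • x := fun z => by simp [P0]
    refine ⟨LinearMap.codRestrict _ (LinearMap.codRestrict H (P0 ∘ₗ (LinearMap.ker (A + t • B)).subtype)
      (fun z => ?_)) (fun z => ?_), fun z hz => ?_⟩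
    · exact hmem t z z.2 hcase
    · exact hrad t z z.2 (hmem t z z.2 hcase)
    · have h1 : P0 (z : V) = 0 := congrArg (fun y : LinearMap.ker (A' + t • B') => ((y : H) : V)) hz
      rw [hP0] at h1
      exact sub_eq_zero.1 h1
  -- extend an isotropic subspace of `H` by `x`
  have hext : ∀ K' : Submodule ℂ H, (∀ y ∈ K', ∀ z ∈ K', A' y z = 0 ∧ B' y z = 0) →
      ∃ K : Submodule ℂ V, (∀ x ∈ K, ∀ y ∈ K, A x y = 0 ∧ B x y = 0) ∧
        finrank ℂ K' + 1 ≤ finrank ℂ K := by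
    intro K' hK'
    refine ⟨K'.map H.subtype ⊔ Submodule.span ℂ {x}, ?_, ?_⟩
    · intro y hy z hz
      obtain ⟨y1, hy1, y2, hy2, rfl⟩ := Submodule.mem_sup.1 hy
      obtain ⟨z1, hz1, z2, hz2, rfl⟩ := Submodule.mem_sup.1 hz
      obtain ⟨c, rfl⟩ := Submodule.mem_span_singleton.1 hy2
      obtain ⟨d, rfl⟩ := Submodule.mem_span_singleton.1 hz2
      obtain ⟨y', hy', rfl⟩ := hy1
      obtain ⟨z', hz', rfl⟩ := hz1
      have h1 := hK' y' hy' z' hz'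
      have h2 : A y' z' = 0 := h1.1
      have h3 : B y' z' = 0 := h1.2
      have h4 : A y' x = 0 := by rw [hAs, hHA _ y'.2, neg_zero]
      have h5 : B y' x = 0 := by rw [hBs, hHB _ y'.2, neg_zero]
      simp [h2, h3, h4, h5, hA, hB, hHA _ z'.2, hHB _ z'.2]
    · have hlt : K'.map H.subtype < K'.map H.subtype ⊔ Submodule.span ℂ {x} := by
        refine lt_of_le_of_ne le_sup_left (fun heq => hxH ?_)
        have hx1 : x ∈ K'.map H.subtype := by
          rw [heq]
          exact (le_sup_right : Submodule.span ℂ {x} ≤ _) (Submodule.mem_span_singleton_self x)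
        obtain ⟨y, _, hy⟩ := hx1
        rw [← hy]; exact y.2
      have h1 := Submodule.finrank_lt_finrank_of_lt hlt
      rw [Submodule.finrank_map_subtype_eq] at h1
      exact h1
  have hkerdim : ∀ f : V →ₗ[ℂ] ℂ, ∀ U : Submodule ℂ V, finrank ℂ U ≤ finrank ℂ (U ⊓ LinearMap.ker f : Submodule ℂ V) + 1 := by
    intro f U
    have h1 := (f ∘ₗ U.subtype).finrank_range_add_finrank_ker
    have h2 : finrank ℂ (LinearMap.range (f ∘ₗ U.subtype)) ≤ 1 :=
      (Submodule.finrank_le _).trans (by simp)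
    have h3 : finrank ℂ (LinearMap.ker (f ∘ₗ U.subtype)) ≤ finrank ℂ (U ⊓ LinearMap.ker f : Submodule ℂ V) := by
      rw [← Submodule.finrank_map_subtype_eq]
      apply Submodule.finrank_mono
      rintro _ ⟨y, hy, rfl⟩
      exact ⟨y.2, hy⟩
    omega
  by_cases hcom : A x = 0 ∧ B x = 0
  · have hHd : n ≤ finrank ℂ H + 1 := by
      have h1 := hkerdim ψ ⊤
      rw [finrank_top, hn] at h1
      have h2 : H = ⊤ ⊓ LinearMap.ker ψ := by simp [H, hcom.1, hcom.2]
      rw [h2]; exact h1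
    obtain ⟨K', hK', hd⟩ := ih _ hHlt H A' B' (h - 1) rfl (fun y => hA y) (fun y => hB y)
      ⟨T, hTf, fun t ht => by
        obtain ⟨P, hP⟩ := hproj t (Or.inl hcom)
        have h1 := P.finrank_range_add_finrank_ker
        have h2 := Submodule.finrank_le (LinearMap.range P)
        have h3 : finrank ℂ (LinearMap.ker P) ≤ 1 := by
          rw [← Submodule.finrank_map_subtype_eq]
          refine (Submodule.finrank_mono (t := Submodule.span ℂ {x}) ?_).trans (finrank_span_singleton hx0).le
          rintro _ ⟨y, hy, rfl⟩
          rw [Submodule.mem_span_singleton]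
          exact ⟨ψ y, (hP y hy).symm⟩
        have h4 := hT t ht
        omega⟩
    obtain ⟨K, hK, hd2⟩ := hext K' hK'
    exact ⟨K, hK, by omega⟩
  · have hHd : n ≤ finrank ℂ H + 2 := by
      have h1 := hkerdim φ ⊤
      have h2 := hkerdim ψ (⊤ ⊓ LinearMap.ker φ)
      rw [finrank_top, hn] at h1
      have h3 : (⊤ ⊓ LinearMap.ker φ) ⊓ LinearMap.ker ψ ≤ H := by
        rintro y ⟨⟨_, hy1⟩, hy2⟩
        have hy1' : φ y = 0 := hy1
        refine ⟨⟨?_, ?_⟩, hy2⟩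
        · simp [hAx, hy1']
        · simp [hBx, hy1']
      have h4 := Submodule.finrank_mono h3
      omega
    obtain ⟨K', hK', hd⟩ := ih _ hHlt H A' B' h rfl (fun y => hA y) (fun y => hB y)
      ⟨T ∪ {t | (A + t • B) x = 0}, hTf.union (Set.Subsingleton.finite (by
          intro s hs t ht
          by_contra hst
          apply hcom
          have hs' : A x + s • B x = 0 := hs
          have ht' : A x + t • B x = 0 := ht
          have hBx0 : B x = 0 := by
            have : (s - t) • B x = 0 := by
              rw [sub_smul, eq_neg_of_add_eq_zero_right hs', eq_neg_of_add_eq_zero_right ht', sub_self]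
            exact (smul_eq_zero.1 this).resolve_left (sub_ne_zero.2 hst)
          rw [hBx0, smul_zero, add_zero] at hs'
          exact ⟨hs', hBx0⟩)), fun t ht => by
        simp only [Set.mem_union, Set.mem_ofPred_eq, not_or] at ht
        obtain ⟨P, hP⟩ := hproj t (Or.inr ht.2)
        refine (hT t ht.1).trans (LinearMap.finrank_le_finrank_of_injective (f := P) ?_)
        rw [← LinearMap.ker_eq_bot, LinearMap.ker_eq_bot']
        intro z hz
        have h1 := hP z hz
        have h2 : (A + t • B) (ψ z • x) = 0 := by rw [← h1]; exact z.2
        rw [map_smul] at h2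
        have h3 := (smul_eq_zero.1 h2).resolve_right ht.2
        rw [h3, zero_smul] at h1
        exact Subtype.ext h1⟩
    obtain ⟨K, hK, hd2⟩ := hext K' hK'
    exact ⟨K, hK, by omega⟩

/-- The Sylvester type system attached to the standard pencil is solvable. -/
theorem sylvester_aux {ι : Type} [Fintype ι] (ρ : ι → ℕ) (hρ : ∀ i, 1 ≤ ρ i)
    (C1 C2 : (Σ i, Fin (ρ i)) → (Σ i, Fin (ρ i)) → ℂ)
    (h1 : ∀ α β, C1 α β = - C1 β α) (h2 : ∀ α β, C2 α β = - C2 β α) :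
    ∃ Y : (Σ i, Fin (ρ i + 1)) → (Σ i, Fin (ρ i)) → ℂ,
      (∀ α β, Y ⟨α.1, α.2.castSucc⟩ β - Y ⟨β.1, β.2.castSucc⟩ α = C1 α β) ∧
      (∀ α β, Y ⟨α.1, α.2.succ⟩ β - Y ⟨β.1, β.2.succ⟩ α = C2 α β) := by
  classical
  let J := Σ i, Fin (ρ i)
  let Φ : ((Σ i, Fin (ρ i + 1)) → J → ℂ) →ₗ[ℂ] (J → J → ℂ) × (J → J → ℂ) :=
    { toFun := fun Y => (fun α β => Y ⟨α.1, α.2.castSucc⟩ β - Y ⟨β.1, β.2.castSucc⟩ α,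
        fun α β => Y ⟨α.1, α.2.succ⟩ β - Y ⟨β.1, β.2.succ⟩ α)
      map_add' := by
        intro Y Z
        refine Prod.ext ?_ ?_ <;> (funext α β; simp only [Pi.add_apply, Prod.mk_add_mk]; ring)
      map_smul' := by
        intro c Y
        refine Prod.ext ?_ ?_ <;> (funext α β; simp [mul_sub]) }
  by_contra hcon
  have hnot : (C1, C2) ∉ LinearMap.range Φ := by
    rintro ⟨Y, hY⟩
    apply hcon
    refine ⟨Y, fun α β => ?_, fun α β => ?_⟩
    · exact congrFun (congrFun (congrArg Prod.fst hY) α) β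
    · exact congrFun (congrFun (congrArg Prod.snd hY) α) β
  obtain ⟨ℓ, hℓ, hℓR⟩ := Submodule.exists_dual_map_eq_bot_of_notMem hnot inferInstance
  have hℓ0 : ∀ Y, ℓ (Φ Y) = 0 := by
    intro Y
    have : ℓ (Φ Y) ∈ (LinearMap.range Φ).map ℓ := ⟨_, ⟨Y, rfl⟩, rfl⟩
    rw [hℓR] at this
    exact this
  let E : J → J → J → J → ℂ := fun α β γ δ => if γ = α ∧ δ = β then 1 else 0
  let Z1 : J → J → ℂ := fun α β => ℓ (E α β, 0) - ℓ (E β α, 0)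
  let Z2 : J → J → ℂ := fun α β => ℓ (0, E α β) - ℓ (0, E β α)
  have hZ1s : ∀ α β, Z1 α β = - Z1 β α := fun α β => by simp [Z1]
  have hZ2s : ∀ α β, Z2 α β = - Z2 β α := fun α β => by simp [Z2]
  have hZ1ℓ : ∀ α β, Z1 α β = ℓ (fun γ δ => E α β γ δ - E α β δ γ, 0) := by
    intro α β
    simp only [Z1, ← map_sub]
    congr 1
    refine Prod.ext ?_ (by simp)
    funext γ δ
    simp only [E, Prod.mk_sub_mk, Pi.sub_apply, and_comm]
  have hZ2ℓ : ∀ α β, Z2 α β = ℓ (0, fun γ δ => E α β γ δ - E α β δ γ) := by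
    intro α β
    simp only [Z2, ← map_sub]
    congr 1
    refine Prod.ext (by simp) ?_
    funext γ δ
    simp only [E, Prod.mk_sub_mk, Pi.sub_apply, and_comm]
  let Y0 : (Σ i, Fin (ρ i + 1)) → J → ((Σ i, Fin (ρ i + 1)) → J → ℂ) :=
    fun c β c' β' => if c' = c ∧ β' = β then 1 else 0
  have inj1 : ∀ i (s : Fin (ρ i)) (γ : J), ((⟨γ.1, γ.2.castSucc⟩ : Σ i, Fin (ρ i + 1)) = ⟨i, s.castSucc⟩) ↔ γ = ⟨i, s⟩ := by
    rintro i s ⟨j, t⟩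
    constructor
    · intro h
      rw [Sigma.mk.injEq] at h
      obtain ⟨h1, h2⟩ := h
      simp only at h1
      subst h1
      rw [heq_eq_eq, Fin.castSucc_inj] at h2
      simp only at h2
      rw [h2]
    · intro h; cases h; rfl
  have inj2 : ∀ i (s : Fin (ρ i)) (γ : J), ((⟨γ.1, γ.2.succ⟩ : Σ i, Fin (ρ i + 1)) = ⟨i, s.succ⟩) ↔ γ = ⟨i, s⟩ := by
    rintro i s ⟨j, t⟩
    constructor
    · intro h
      rw [Sigma.mk.injEq] at h
      obtain ⟨h1, h2⟩ := h
      simp only at h1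
      subst h1
      rw [heq_eq_eq, Fin.succ_inj] at h2
      simp only at h2
      rw [h2]
    · intro h; cases h; rfl
  have ne1 : ∀ i (γ : J), ¬ ((⟨γ.1, γ.2.castSucc⟩ : Σ i, Fin (ρ i + 1)) = ⟨i, Fin.last _⟩) := by
    rintro i ⟨j, t⟩ h
    rw [Sigma.mk.injEq] at h
    obtain ⟨h1, h2⟩ := h
    simp only at h1
    subst h1
    exact absurd (eq_of_heq h2) (Fin.castSucc_lt_last _).ne
  have ne2 : ∀ i (γ : J), ¬ ((⟨γ.1, γ.2.succ⟩ : Σ i, Fin (ρ i + 1)) = ⟨i, 0⟩) := by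
    rintro i ⟨j, t⟩ h
    rw [Sigma.mk.injEq] at h
    obtain ⟨h1, h2⟩ := h
    simp only at h1
    subst h1
    exact absurd (eq_of_heq h2) (Fin.succ_ne_zero _)
  have r1 : ∀ i (s : Fin (ρ i)) β, s.val = 0 → Z1 ⟨i, s⟩ β = 0 := by
    intro i s β hs
    rw [hZ1ℓ, ← hℓ0 (Y0 ⟨i, s.castSucc⟩ β)]
    congr 1
    have hs0 : s.castSucc = 0 := Fin.ext (by simpa using hs)
    refine Prod.ext ?_ ?_
    · funext γ δ
      simp only [Φ, Y0, E, LinearMap.coe_mk, AddHom.coe_mk, inj1]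
    · funext γ δ
      simp only [Φ, Y0, LinearMap.coe_mk, AddHom.coe_mk, hs0, ne2, false_and, if_false, sub_zero, Pi.zero_apply]
  have r2 : ∀ i (s : Fin (ρ i)) β, s.val + 1 = ρ i → Z2 ⟨i, s⟩ β = 0 := by
    intro i s β hs
    rw [hZ2ℓ, ← hℓ0 (Y0 ⟨i, s.succ⟩ β)]
    congr 1
    have hs0 : s.succ = Fin.last _ := Fin.ext (by simpa using hs)
    refine Prod.ext ?_ ?_
    · funext γ δ
      simp only [Φ, Y0, LinearMap.coe_mk, AddHom.coe_mk, hs0, ne1, false_and, if_false, sub_zero, Pi.zero_apply]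
    · funext γ δ
      simp only [Φ, Y0, E, LinearMap.coe_mk, AddHom.coe_mk, inj2]
  have r3 : ∀ i (s s' : Fin (ρ i)) β, s'.val = s.val + 1 → Z1 ⟨i, s'⟩ β + Z2 ⟨i, s⟩ β = 0 := by
    intro i s s' β hs
    rw [hZ1ℓ, hZ2ℓ, ← map_add, ← hℓ0 (Y0 ⟨i, s.succ⟩ β)]
    congr 1
    have hs0 : s.succ = s'.castSucc := Fin.ext (by simp [hs])
    refine Prod.ext ?_ ?_
    · funext γ δ
      simp only [Φ, Y0, E, LinearMap.coe_mk, AddHom.coe_mk, hs0, inj1, Prod.mk_add_mk, add_zero]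
    · funext γ δ
      simp only [Φ, Y0, E, LinearMap.coe_mk, AddHom.coe_mk, inj2, Prod.mk_add_mk, zero_add]
  have step : ∀ n, (∀ i (s : Fin (ρ i)) β, s.val = n → Z1 ⟨i, s⟩ β = 0) →
      ∀ i (s : Fin (ρ i)) β, s.val = n → Z2 ⟨i, s⟩ β = 0 := by
    rintro n hn i s ⟨j, t⟩ hs
    rw [hZ2s, neg_eq_zero]
    by_cases ht : t.val + 1 = ρ j
    · exact r2 j t _ ht
    · have h3 := r3 j t ⟨t.val + 1, by omega⟩ ⟨i, s⟩ rfl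
      rw [hZ1s, hn i s _ hs] at h3
      simpa using h3
  have all1 : ∀ n, ∀ i (s : Fin (ρ i)) β, s.val = n → Z1 ⟨i, s⟩ β = 0 := by
    intro n
    induction n with
    | zero => exact r1
    | succ n ihn =>
      intro i s β hs
      have h3 := r3 i ⟨n, by omega⟩ s β hs
      rw [step n ihn i _ β rfl, add_zero] at h3
      exact h3
  have hZ1 : ∀ α β, ℓ (E α β, 0) = ℓ (E β α, 0) := fun α β => sub_eq_zero.1 (all1 _ α.1 α.2 β rfl)
  have hZ2 : ∀ α β, ℓ (0, E α β) = ℓ (0, E β α) :=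
    fun α β => sub_eq_zero.1 (step _ (all1 _) α.1 α.2 β rfl)
  have dec : ∀ C : J → J → ℂ, C = ∑ α, ∑ β, C α β • E α β := by
    intro C
    funext γ δ
    simp only [Finset.sum_apply, Pi.smul_apply, E, smul_eq_mul, mul_ite, mul_one, mul_zero]
    rw [Finset.sum_eq_single γ, Finset.sum_eq_single δ]
    · simp
    · intro b _ hb; simp [Ne.symm hb]
    · simp
    · intro b _ hb; simp [Ne.symm hb]
    · simp
  have half : ∀ (L : (J → J → ℂ) →ₗ[ℂ] ℂ) (C : J → J → ℂ), (∀ α β, C α β = - C β α) →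
      (∀ α β, L (E α β) = L (E β α)) → L C = 0 := by
    intro L C hC hL
    have e1 : L C = ∑ α, ∑ β, C α β * L (E α β) := by
      conv_lhs => rw [dec C]
      simp only [map_sum, map_smul, smul_eq_mul]
    have e2 : L C = - L C := by
      conv_lhs => rw [e1, Finset.sum_comm]
      rw [e1, ← Finset.sum_neg_distrib]
      refine Finset.sum_congr rfl fun α _ => ?_
      rw [← Finset.sum_neg_distrib]
      refine Finset.sum_congr rfl fun β _ => ?_
      rw [hC β α, hL β α]; ring
    exact self_eq_neg.1 e2
  apply hℓ
  have hsplit : ((C1, C2) : (J → J → ℂ) × (J → J → ℂ)) = (C1, 0) + (0, C2) := by simp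
  rw [hsplit, map_add]
  have q1 := half (ℓ ∘ₗ LinearMap.inl ℂ _ _) C1 h1 (fun α β => hZ1 α β)
  have q2 := half (ℓ ∘ₗ LinearMap.inr ℂ _ _) C2 h2 (fun α β => hZ2 α β)
  simp only [LinearMap.comp_apply, LinearMap.inl_apply, LinearMap.inr_apply] at q1 q2
  rw [q1, q2, add_zero]

theorem chain_sorted (r h : ℕ) (K W : Type) [AddCommGroup K] [Module ℂ K] [FiniteDimensional ℂ K]
    [AddCommGroup W] [Module ℂ W] [FiniteDimensional ℂ W] (A B : K →ₗ[ℂ] W)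
    (hW : finrank ℂ W = r) (hK : finrank ℂ K = r + h)
    (hs : ∀ a b : ℂ, (a ≠ 0 ∨ b ≠ 0) → Function.Surjective (a • A + b • B)) :
    ∃ (ρ : Fin h → ℕ) (e : Basis (Σ i, Fin (ρ i + 1)) ℂ K)
      (w : Basis (Σ i, Fin (ρ i)) ℂ W), (∀ i j, i ≤ j → ρ j ≤ ρ i) ∧ ∑ i, ρ i = r ∧
      (∀ i (s : Fin (ρ i)), A (e ⟨i, s.castSucc⟩) = w ⟨i, s⟩) ∧
      (∀ i, A (e ⟨i, Fin.last _⟩) = 0) ∧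
      (∀ i (s : Fin (ρ i)), B (e ⟨i, s.succ⟩) = w ⟨i, s⟩) ∧
      (∀ i, B (e ⟨i, 0⟩) = 0) := by
  obtain ⟨ι, hι, σ, e, w, h1, h2, h3, h4⟩ := chain_aux r K W A B hW hs
  have hcW : ∑ i, σ i = r := by
    rw [← hW, finrank_eq_card_basis w]; simp
  have hcK : ∑ i, (σ i + 1) = r + h := by
    rw [← hK, finrank_eq_card_basis e]; simp
  have hc : Fintype.card ι = h := by
    rw [Finset.sum_add_distrib] at hcK
    simp at hcK
    omega
  let τ0 : ι ≃ Fin h := Fintype.equivFinOfCardEq hc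
  let g : Fin h → ℕᵒᵈ := fun k => OrderDual.toDual (σ (τ0.symm k))
  let τ : Fin h ≃ ι := (Tuple.sort g).trans τ0.symm
  have hmono : Monotone (g ∘ Tuple.sort g) := Tuple.monotone_sort g
  refine ⟨fun k => σ (τ k), e.reindex (Equiv.sigmaCongrLeft (β := fun i => Fin (σ i + 1)) τ).symm,
    w.reindex (Equiv.sigmaCongrLeft (β := fun i => Fin (σ i)) τ).symm, ?_, ?_, ?_, ?_, ?_, ?_⟩
  · intro i j hij
    exact hmono hij
  · rw [← hcW]; exact Equiv.sum_comp τ σ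
  · intro i s
    simp only [Basis.reindex_apply, Equiv.symm_symm, Equiv.sigmaCongrLeft_apply]
    exact h1 _ _
  · intro i
    simp only [Basis.reindex_apply, Equiv.symm_symm, Equiv.sigmaCongrLeft_apply]
    exact h2 _
  · intro i s
    simp only [Basis.reindex_apply, Equiv.symm_symm, Equiv.sigmaCongrLeft_apply]
    exact h3 _ _
  · intro i
    simp only [Basis.reindex_apply, Equiv.symm_symm, Equiv.sigmaCongrLeft_apply]
    exact h4 _

theorem normal_form (r h : ℕ) (V : Type) [AddCommGroup V] [Module ℂ V] [FiniteDimensional ℂ V]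
    (A B : V →ₗ[ℂ] V →ₗ[ℂ] ℂ) (hV : finrank ℂ V = 2 * r + h)
    (hA : ∀ x, A x x = 0) (hB : ∀ x, B x x = 0)
    (hk : ∀ a b : ℂ, (a ≠ 0 ∨ b ≠ 0) → finrank ℂ (LinearMap.ker (a • A + b • B)) = h)
    (hcom : ∀ x, A x = 0 → B x = 0 → x = 0) :
    ∃ (ρ : Fin h → ℕ) (f : (Σ i, Fin (ρ i)) → V) (e : (Σ i, Fin (ρ i + 1)) → V),
      (∀ i, 1 ≤ ρ i) ∧ (∀ i j, i ≤ j → ρ j ≤ ρ i) ∧ ∑ i, ρ i = r ∧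
      LinearIndependent ℂ (Sum.elim f e) ∧
      (∀ c d, A (e c) (e d) = 0) ∧ (∀ c d, B (e c) (e d) = 0) ∧
      (∀ α β, A (f α) (f β) = 0) ∧ (∀ α β, B (f α) (f β) = 0) ∧
      (∀ α c, A (f α) (e c) = if c = ⟨α.1, α.2.castSucc⟩ then 1 else 0) ∧
      (∀ α c, B (f α) (e c) = if c = ⟨α.1, α.2.succ⟩ then 1 else 0) := by
  have hAs : ∀ x y, A x y = - A y x := by
    intro x y
    have := hA (x + y)
    simp only [map_add, LinearMap.add_apply, hA] at this
    linear_combination this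
  have hBs : ∀ x y, B x y = - B y x := by
    intro x y
    have := hB (x + y)
    simp only [map_add, LinearMap.add_apply, hB] at this
    linear_combination this
  obtain ⟨K, hKi, hKd⟩ := isotropic_aux _ V A B h hV hA hB ⟨∅, Set.finite_empty, fun t _ => by
    have := hk 1 t (by simp)
    rw [one_smul] at this
    exact this.ge⟩
  obtain ⟨Q, hKQ⟩ := Submodule.exists_isCompl K
  have hdim := Submodule.finrank_add_eq_of_isCompl hKQ
  let PA : K →ₗ[ℂ] Dual ℂ Q := A.flip.domRestrict₁₂ K Q
  let PB : K →ₗ[ℂ] Dual ℂ Q := B.flip.domRestrict₁₂ K Q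
  have hPA : ∀ (y : K) (q : Q), PA y q = A q y := fun y q => rfl
  have hPB : ∀ (y : K) (q : Q), PB y q = B q y := fun y q => rfl
  have hdual : finrank ℂ (Dual ℂ Q) = finrank ℂ Q := Subspace.dual_finrank_eq
  have hzero : ∀ (a b : ℂ) (y : K), (a • PA + b • PB) y = 0 → (a • A + b • B) (y : V) = 0 := by
    intro a b y hy
    ext v
    obtain ⟨k, hk, q, hq, rfl⟩ : ∃ k ∈ K, ∃ q ∈ Q, k + q = v := by
      rw [← Submodule.mem_sup, hKQ.sup_eq_top]; trivial
    have h1 := LinearMap.congr_fun hy ⟨q, hq⟩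
    simp only [LinearMap.add_apply, LinearMap.smul_apply, hPA, hPB, smul_eq_mul, LinearMap.zero_apply] at h1
    have h2 := hKi y y.2 k hk
    simp only [LinearMap.add_apply, LinearMap.smul_apply, smul_eq_mul, map_add, h2.1, h2.2,
      LinearMap.zero_apply, hAs y q, hBs y q]
    linear_combination -h1
  have hkerle : ∀ a b : ℂ, (a ≠ 0 ∨ b ≠ 0) → finrank ℂ (LinearMap.ker (a • PA + b • PB)) ≤ h := by
    intro a b hab
    rw [← hk a b hab, ← Submodule.finrank_map_subtype_eq]
    apply Submodule.finrank_mono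
    rintro _ ⟨y, hy, rfl⟩
    exact hzero a b y hy
  have hrn : ∀ a b : ℂ, finrank ℂ (LinearMap.range (a • PA + b • PB)) + finrank ℂ (LinearMap.ker (a • PA + b • PB)) = finrank ℂ K :=
    fun a b => LinearMap.finrank_range_add_finrank_ker _
  have hrle : ∀ a b : ℂ, finrank ℂ (LinearMap.range (a • PA + b • PB)) ≤ finrank ℂ Q :=
    fun a b => (Submodule.finrank_le _).trans hdual.le
  have hKr : finrank ℂ K = r + h := by
    have h1 := hkerle 1 0 (by simp)
    have h2 := hrn 1 0
    have h3 := hrle 1 0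
    omega
  have hQr : finrank ℂ (Dual ℂ Q) = r := by omega
  obtain ⟨ρ, e, w, hanti, hsum, h1, h2, h3, h4⟩ := chain_sorted r h K (Dual ℂ Q) PA PB hQr hKr (by
    intro a b hab
    rw [← LinearMap.range_eq_top]
    apply Submodule.eq_top_of_finrank_eq
    have h1 := hkerle a b hab
    have h2 := hrn a b
    have h3 := hrle a b
    omega)
  have hρ : ∀ i, 1 ≤ ρ i := by
    intro i
    by_contra hlt
    have h0 : ρ i = 0 := by omega
    have hl : (Fin.last (ρ i)) = 0 := Fin.ext (by simp [h0])
    have ha := h2 i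
    have hb := h4 i
    rw [hl] at ha
    have ha' := hzero 1 0 (e ⟨i, 0⟩) (by simp [ha])
    have hb' := hzero 0 1 (e ⟨i, 0⟩) (by simp [hb])
    have := hcom (e ⟨i, 0⟩) (by simpa using ha') (by simpa using hb')
    exact e.ne_zero ⟨i, 0⟩ (Subtype.ext this)
  -- dual basis
  classical
  let q : (Σ i, Fin (ρ i)) → Q := fun β => (evalEquiv ℂ Q).symm (w.dualBasis β)
  have hq : ∀ α β, w α (q β) = if α = β then 1 else 0 := by
    intro α β
    have : w α (q β) = (evalEquiv ℂ Q (q β)) (w α) := rfl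
    rw [this, LinearEquiv.apply_symm_apply, Basis.dualBasis_apply_self]
  have hAf : ∀ α c, A (q α) (e c) = if c = ⟨α.1, α.2.castSucc⟩ then 1 else 0 := by
    rintro α ⟨i, t⟩
    rw [← hPA]
    refine Fin.lastCases ?_ (fun s => ?_) t
    · rw [h2, LinearMap.zero_apply, if_neg]
      obtain ⟨j, u⟩ := α
      intro hh
      rw [Sigma.mk.injEq] at hh
      obtain ⟨g1, g2⟩ := hh
      simp only at g1
      subst g1
      exact absurd (eq_of_heq g2).symm (Fin.castSucc_lt_last _).ne
    · rw [h1, hq]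
      congr 1
      rw [eq_iff_iff]
      obtain ⟨j, u⟩ := α
      constructor
      · intro hh; cases hh; rfl
      · intro hh
        rw [Sigma.mk.injEq] at hh
        obtain ⟨g1, g2⟩ := hh
        simp only at g1
        subst g1
        rw [Fin.castSucc_injective _ (eq_of_heq g2)]
  have hBf : ∀ α c, B (q α) (e c) = if c = ⟨α.1, α.2.succ⟩ then 1 else 0 := by
    rintro α ⟨i, t⟩
    rw [← hPB]
    refine Fin.cases ?_ (fun s => ?_) t
    · rw [h4, LinearMap.zero_apply, if_neg]
      obtain ⟨j, u⟩ := α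
      intro hh
      rw [Sigma.mk.injEq] at hh
      obtain ⟨g1, g2⟩ := hh
      simp only at g1
      subst g1
      exact absurd (eq_of_heq g2).symm (Fin.succ_ne_zero _)
    · rw [h3, hq]
      congr 1
      rw [eq_iff_iff]
      obtain ⟨j, u⟩ := α
      constructor
      · intro hh; cases hh; rfl
      · intro hh
        rw [Sigma.mk.injEq] at hh
        obtain ⟨g1, g2⟩ := hh
        simp only at g1
        subst g1
        rw [Fin.succ_injective _ (eq_of_heq g2)]
  obtain ⟨Y, hY1, hY2⟩ := sylvester_aux ρ hρ (fun α β => - A (q α) (q β)) (fun α β => - B (q α) (q β))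
    (fun α β => by rw [hAs]) (fun α β => by rw [hBs])
  have hAe : ∀ c d, A (e c) (e d) = 0 := fun c d => (hKi _ (e c).2 _ (e d).2).1
  have hBe : ∀ c d, B (e c) (e d) = 0 := fun c d => (hKi _ (e c).2 _ (e d).2).2
  let f : (Σ i, Fin (ρ i)) → V := fun α => q α + ∑ c, Y c α • (e c : V)
  have hAfe : ∀ α c, A (f α) (e c) = if c = ⟨α.1, α.2.castSucc⟩ then 1 else 0 := by
    intro α c
    rw [← hAf]
    simp [f, hAe]
  have hBfe : ∀ α c, B (f α) (e c) = if c = ⟨α.1, α.2.succ⟩ then 1 else 0 := by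
    intro α c
    rw [← hBf]
    simp [f, hBe]
  have hAff : ∀ α β, A (f α) (f β) = 0 := by
    intro α β
    have e1 : A (f α) (f β) = A (f α) (q β) + ∑ c, Y c β * A (f α) (e c) := by
      simp only [f, map_add, map_sum, map_smul, smul_eq_mul]
    have e2 : A (f α) (q β) = A (q α) (q β) + ∑ c, Y c α * A (e c) (q β) := by
      simp only [f, map_add, map_sum, map_smul, smul_eq_mul, LinearMap.add_apply, LinearMap.sum_apply,
        LinearMap.smul_apply]
    rw [e1, e2]
    simp only [hAs (e _) (q _), hAf, hAfe]
    simp only [mul_neg, mul_ite, mul_one, mul_zero, Finset.sum_neg_distrib, Finset.sum_ite_eq',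
      Finset.mem_univ, if_true]
    linear_combination hY1 α β
  have hBff : ∀ α β, B (f α) (f β) = 0 := by
    intro α β
    have e1 : B (f α) (f β) = B (f α) (q β) + ∑ c, Y c β * B (f α) (e c) := by
      simp only [f, map_add, map_sum, map_smul, smul_eq_mul]
    have e2 : B (f α) (q β) = B (q α) (q β) + ∑ c, Y c α * B (e c) (q β) := by
      simp only [f, map_add, map_sum, map_smul, smul_eq_mul, LinearMap.add_apply, LinearMap.sum_apply,
        LinearMap.smul_apply]
    rw [e1, e2]
    simp only [hBs (e _) (q _), hBf, hBfe]
    simp only [mul_neg, mul_ite, mul_one, mul_zero, Finset.sum_neg_distrib, Finset.sum_ite_eq',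
      Finset.mem_univ, if_true]
    linear_combination hY2 α β
  refine ⟨ρ, f, fun c => e c, hρ, hanti, hsum, ?_, hAe, hBe, hAff, hBff, fun α c => ?_, fun α c => ?_⟩
  · rw [Fintype.linearIndependent_iff]
    intro g hg
    rw [Fintype.sum_sum_type] at hg
    simp only [Sum.elim_inl, Sum.elim_inr] at hg
    have hl : ∀ α, g (Sum.inl α) = 0 := by
      rintro ⟨j, s⟩
      have := congrArg (fun v => A v (e ⟨j, s.castSucc⟩)) hg
      simp only [map_add, map_sum, map_smul, LinearMap.add_apply, LinearMap.sum_apply,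
        LinearMap.smul_apply, hAfe, hAe, smul_eq_mul, mul_zero, Finset.sum_const_zero, add_zero, map_zero,
        LinearMap.zero_apply] at this
      rw [Finset.sum_eq_single ⟨j, s⟩] at this
      · simpa using this
      · rintro ⟨i, u⟩ _ hne
        rw [if_neg, mul_zero]
        intro hh
        apply hne
        rw [Sigma.mk.injEq] at hh
        obtain ⟨g1, g2⟩ := hh
        simp only at g1
        subst g1
        rw [Fin.castSucc_injective _ (eq_of_heq g2)]
      · simp
    simp only [hl, zero_smul, Finset.sum_const_zero, zero_add] at hg
    have hr := Fintype.linearIndependent_iff.1 e.linearIndependent (fun c => g (Sum.inr c)) (by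
      apply Subtype.ext
      simpa using hg)
    rintro (α | c)
    · exact hl α
    · exact hr c
  · exact hAfe α c
  · exact hBfe α c

theorem partialSum_succ' {h : ℕ} (ρ : Fin h → ℕ) (i : Fin h) :
    partialSum ρ (i.val + 1) = partialSum ρ i.val + ρ i := by
  simp [partialSum, Finset.sum_range_succ]

theorem partialSum_mono {h : ℕ} (ρ : Fin h → ℕ) {a b : ℕ} (hab : a ≤ b) :
    partialSum ρ a ≤ partialSum ρ b :=
  Finset.sum_le_sum_of_subset (Finset.range_mono hab)

theorem partialSum_eq {h : ℕ} (ρ : Fin h → ℕ) (i : Fin h) :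
    partialSum ρ i.val = ∑ j : Fin i.val, ρ (Fin.castLE i.2.le j) := by
  rw [partialSum, Finset.sum_range]
  refine Finset.sum_congr rfl fun j _ => ?_
  rw [dif_pos (j.2.trans i.2)]
  rfl

theorem partialSum_unique {h : ℕ} (ρ : Fin h → ℕ) (i i' : Fin h) (s : ℕ)
    (h1 : partialSum ρ i ≤ s) (h2 : s < partialSum ρ (i.val + 1))
    (h1' : partialSum ρ i' ≤ s) (h2' : s < partialSum ρ (i'.val + 1)) : i' = i := by
  rcases lt_trichotomy i i' with hlt | heq | hlt
  · have := partialSum_mono ρ (show i.val + 1 ≤ i'.val from hlt)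
    omega
  · exact heq.symm
  · have := partialSum_mono ρ (show i'.val + 1 ≤ i.val from hlt)
    omega

theorem exists_equivs {h : ℕ} (ρ : Fin h → ℕ) (r : ℕ) (hsum : ∑ i, ρ i = r) :
    ∃ (eJ : (Σ i, Fin (ρ i)) ≃ Fin r) (eI : (Σ i, Fin (ρ i + 1)) ≃ Fin (r + h)),
      ∀ a b α c, Fbar ρ r (r + h) a b (eJ α) (eI c) =
        open scoped Classical in
        if c = ⟨α.1, α.2.castSucc⟩ then a else if c = ⟨α.1, α.2.succ⟩ then b else 0 := by
  have hsum2 : ∑ i, (ρ i + 1) = r + h := by simp [Finset.sum_add_distrib, hsum]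
  let eJ : (Σ i, Fin (ρ i)) ≃ Fin r := finSigmaFinEquiv.trans (finCongr hsum)
  let eI : (Σ i, Fin (ρ i + 1)) ≃ Fin (r + h) := finSigmaFinEquiv.trans (finCongr hsum2)
  have hJ : ∀ α, (eJ α).val = partialSum ρ α.1 + α.2 := by
    intro α
    rw [partialSum_eq]
    exact finSigmaFinEquiv_apply α
  have hI : ∀ c, (eI c).val = partialSum ρ c.1 + c.1 + c.2 := by
    intro c
    rw [partialSum_eq]
    refine (finSigmaFinEquiv_apply c).trans ?_
    simp [Finset.sum_add_distrib]
  refine ⟨eJ, eI, fun a b α c => ?_⟩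
  have key : ∀ (k : ℕ) (d : Σ i, Fin (ρ i + 1)), (eI d).val = (eJ α).val + α.1.val + k →
      ((∃ i : Fin h, partialSum ρ i ≤ (eJ α).val ∧ (eJ α).val < partialSum ρ (i.val + 1) ∧
        (eI c).val = (eJ α).val + i.val + k) ↔ c = d) := by
    intro k d hd
    have g1 : partialSum ρ α.1 ≤ (eJ α).val := by rw [hJ]; omega
    have g2 : (eJ α).val < partialSum ρ (α.1.val + 1) := by
      rw [hJ, partialSum_succ']; have := α.2.2; omega
    constructor
    · rintro ⟨i, q1, q2, q3⟩
      have hi := partialSum_unique ρ α.1 i _ g1 g2 q1 q2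
      subst hi
      exact eI.injective (Fin.ext (q3.trans hd.symm))
    · rintro rfl
      exact ⟨α.1, g1, g2, hd⟩
  have k1 := key 0 ⟨α.1, α.2.castSucc⟩ (by rw [hI, hJ]; simp; omega)
  have k2 := key 1 ⟨α.1, α.2.succ⟩ (by rw [hI, hJ]; simp; omega)
  simp only [add_zero] at k1
  simp only [Fbar, Matrix.of_apply, k1, k2]

theorem fpencil_aux (r h n : ℕ) (hn : 2 * r + h = n) (C D : Matrix (Fin n) (Fin n) ℂ)
    (hC : Cᵀ = -C) (hD : Dᵀ = -D)
    (hk : ∀ a b : ℂ, (a ≠ 0 ∨ b ≠ 0) → (a • C + b • D).rank = 2 * r)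
    (hcom : ∀ x, C *ᵥ x = 0 → D *ᵥ x = 0 → x = 0) :
    ∃ ρ : Fin h → ℕ, (∀ i, 1 ≤ ρ i) ∧ (∀ i j, i ≤ j → ρ j ≤ ρ i) ∧ (∑ i, ρ i = r) ∧
      ∃ S : Matrix (Fin n) (Fin n) ℂ, IsUnit S ∧
        S * C * Sᵀ = Matrix.reindex (finCongr hn) (finCongr hn) (Fpencil ρ r 1 0) ∧
        S * D * Sᵀ = Matrix.reindex (finCongr hn) (finCongr hn) (Fpencil ρ r 0 1) := by
  have hap : ∀ (X : Matrix (Fin n) (Fin n) ℂ) x y,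
      (Matrix.toLinearMap₂' ℂ X : (Fin n → ℂ) →ₗ[ℂ] (Fin n → ℂ) →ₗ[ℂ] ℂ) x y = x ⬝ᵥ X *ᵥ y := fun X x y => Matrix.toLinearMap₂'_apply' X x y
  have hsk : ∀ X : Matrix (Fin n) (Fin n) ℂ, Xᵀ = -X → ∀ x y,
      x ⬝ᵥ X *ᵥ y = -(y ⬝ᵥ X *ᵥ x) := by
    intro X hX x y
    rw [Matrix.dotProduct_mulVec, ← Matrix.mulVec_transpose, hX, Matrix.neg_mulVec,
      neg_dotProduct, dotProduct_comm]
  have hself : ∀ X : Matrix (Fin n) (Fin n) ℂ, Xᵀ = -X → ∀ x, x ⬝ᵥ X *ᵥ x = 0 :=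
    fun X hX x => self_eq_neg.1 (hsk X hX x x)
  have hker : ∀ X : Matrix (Fin n) (Fin n) ℂ, Xᵀ = -X → ∀ x,
      (Matrix.toLinearMap₂' ℂ X : (Fin n → ℂ) →ₗ[ℂ] (Fin n → ℂ) →ₗ[ℂ] ℂ) x = 0 ↔ X *ᵥ x = 0 := by
    intro X hX x
    constructor
    · intro h
      apply dotProduct_eq_zero
      intro y
      have := LinearMap.congr_fun h y
      rw [hap, hsk X hX, LinearMap.zero_apply, neg_eq_zero] at this
      rw [dotProduct_comm]; exact this
    · intro h
      apply LinearMap.ext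
      intro y
      rw [hap, hsk X hX, h]; simp
  have hCD : ∀ a b : ℂ, (a • C + b • D)ᵀ = -(a • C + b • D) := by
    intro a b
    rw [Matrix.transpose_add, Matrix.transpose_smul, Matrix.transpose_smul, hC, hD]
    simp only [smul_neg, neg_add]
  obtain ⟨ρ, f, e, hρ, hanti, hsum, hli, hAe, hBe, hAf, hBf, hAfe, hBfe⟩ :=
    normal_form r h (Fin n → ℂ) (Matrix.toLinearMap₂' ℂ C) (Matrix.toLinearMap₂' ℂ D)
      (by simp [hn]) (fun x => by rw [hap, hself C hC]) (fun x => by rw [hap, hself D hD])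
      (by
        intro a b hab
        have h1 : LinearMap.ker (a • (Matrix.toLinearMap₂' ℂ C : (Fin n → ℂ) →ₗ[ℂ] (Fin n → ℂ) →ₗ[ℂ] ℂ) +
            b • (Matrix.toLinearMap₂' ℂ D : (Fin n → ℂ) →ₗ[ℂ] (Fin n → ℂ) →ₗ[ℂ] ℂ))
            = LinearMap.ker (a • C + b • D).mulVecLin := by
          ext x
          rw [← map_smul, ← map_smul, ← map_add, LinearMap.mem_ker, hker _ (hCD a b)]
          rfl
        have h2 := (a • C + b • D).mulVecLin.finrank_range_add_finrank_ker
        have h3 : finrank ℂ (LinearMap.range (a • C + b • D).mulVecLin) = 2 * r := hk a b hab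
        rw [h1]
        simp at h2
        omega)
      (fun x h1 h2 => hcom x ((hker C hC x).1 h1) ((hker D hD x).1 h2))
  obtain ⟨eJ, eI, hF⟩ := exists_equivs ρ r hsum
  refine ⟨ρ, hρ, hanti, hsum, ?_⟩
  let E1 : (Fin r ⊕ Fin (r + h)) ≃ Fin (2 * r + h) := finSumFinEquiv.trans (finCongr (by omega))
  let E : ((Σ i, Fin (ρ i)) ⊕ (Σ i, Fin (ρ i + 1))) ≃ Fin n :=
    ((Equiv.sumCongr eJ eI).trans E1).trans (finCongr hn)
  let S : Matrix (Fin n) (Fin n) ℂ := Matrix.of fun p => Sum.elim f e (E.symm p)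
  have hS : ∀ p, S.row p = Sum.elim f e (E.symm p) := fun p => rfl
  have hSX : ∀ (X : Matrix (Fin n) (Fin n) ℂ) x y,
      (S * X * Sᵀ) (E x) (E y) = Matrix.toLinearMap₂' ℂ X (Sum.elim f e x) (Sum.elim f e y) := by
    intro X x y
    rw [hap, Matrix.mul_assoc]
    simp only [Matrix.mul_apply, dotProduct, Matrix.mulVec, Matrix.transpose_apply, S,
      Matrix.of_apply, Equiv.symm_apply_apply]
  have hP : ∀ a b x y, Matrix.reindex (finCongr hn) (finCongr hn) (Fpencil ρ r a b) (E x) (E y)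
      = Matrix.fromBlocks 0 (Fbar ρ r (r + h) a b) (-(Fbar ρ r (r + h) a b)ᵀ) 0
        (Sum.map eJ eI x) (Sum.map eJ eI y) := by
    intro a b x y
    have hE1 : ∀ x, (finCongr hn).symm (E x) = E1 (Sum.map eJ eI x) := fun x => rfl
    simp only [Fpencil, Matrix.reindex_apply, Matrix.submatrix_apply, hE1]
    have hE2 : ∀ z, (finSumFinEquiv.trans (finCongr (by omega : r + (r + h) = 2 * r + h))).symm (E1 z) = z :=
      fun z => E1.symm_apply_apply z
    rw [hE2, hE2]
  refine ⟨S, ?_, ?_, ?_⟩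
  · rw [← Matrix.linearIndependent_rows_iff_isUnit]
    exact hli.comp _ E.symm.injective
  · ext p q
    obtain ⟨x, rfl⟩ := E.surjective p
    obtain ⟨y, rfl⟩ := E.surjective q
    rw [hSX, hP]
    rcases x with α | c <;> rcases y with β | d
    · simp [hAf]
    · simp [hAfe, hF]
    · have : Matrix.toLinearMap₂' ℂ C (e c) (f β) = - Matrix.toLinearMap₂' ℂ C (f β) (e c) := by
        rw [hap, hap, hsk C hC]
      simp [hAfe, hF, this]
    · simp [hAe]
  · ext p q
    obtain ⟨x, rfl⟩ := E.surjective p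
    obtain ⟨y, rfl⟩ := E.surjective q
    have hne : ∀ (α : Σ i, Fin (ρ i)), (⟨α.1, α.2.succ⟩ : Σ i, Fin (ρ i + 1)) ≠ ⟨α.1, α.2.castSucc⟩ := by
      rintro ⟨i, s⟩ hh
      rw [Sigma.mk.injEq] at hh
      have := congrArg Fin.val (eq_of_heq hh.2)
      simp at this
    have hif : ∀ (α : Σ i, Fin (ρ i)) (c : Σ i, Fin (ρ i + 1)),
        Fbar ρ r (r + h) 0 1 (eJ α) (eI c) = Matrix.toLinearMap₂' ℂ D (f α) (e c) := by
      intro α c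
      rw [hF, hBfe]
      by_cases h1 : c = ⟨α.1, α.2.castSucc⟩
      · rw [if_pos h1, if_neg]
        rw [h1]; exact (hne α).symm
      · rw [if_neg h1]
    rw [hSX, hP]
    rcases x with α | c <;> rcases y with β | d
    · simp [hBf]
    · simp [hif]
    · have : Matrix.toLinearMap₂' ℂ D (e c) (f β) = - Matrix.toLinearMap₂' ℂ D (f β) (e c) := by
        rw [hap, hap, hsk D hD]
      simp [hif, this]
    · simp [hBe]

end Aux

/-- Every nondegenerate 2-dimensional space of skew-symmetric
`(N+1)×(N+1)` complex matrices of constant rank `2r` is congruent to a standard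
pencil `F_λ` for some partition `λ` of `r` of length `h = N+1-2r`. -/
theorem stmt_4 (r N : ℕ) (hr : 1 ≤ r) (hN : 2*r ≤ N)
    (M : Submodule ℂ (Matrix (Fin (N+1)) (Fin (N+1)) ℂ))
    (hdim : Module.finrank ℂ M = 2)
    (hskew : ∀ A ∈ M, Aᵀ = -A)
    (hrank : ∀ A ∈ M, A ≠ 0 → A.rank = 2*r)
    (hker : (⨅ A ∈ M, LinearMap.ker (Matrix.mulVecLin A)) = ⊥)
    (hrange : (⨆ A ∈ M, LinearMap.range (Matrix.mulVecLin A)) = ⊤) :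
    ∃ rpart : Fin (N + 1 - 2*r) → ℕ,
      (∀ i, 1 ≤ rpart i) ∧
      (∀ i j, i ≤ j → rpart j ≤ rpart i) ∧
      (∑ i, rpart i = r) ∧
      ∃ S : Matrix (Fin (N+1)) (Fin (N+1)) ℂ, IsUnit S ∧
      ∃ A B, A ∈ M ∧ B ∈ M ∧ LinearIndependent ℂ ![A, B] ∧
        Submodule.span ℂ {A, B} = M ∧
        S * A * Sᵀ = Matrix.reindex (finCongr (by omega)) (finCongr (by omega))
          (Fpencil rpart r 1 0) ∧
        S * B * Sᵀ = Matrix.reindex (finCongr (by omega)) (finCongr (by omega))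
          (Fpencil rpart r 0 1) := by
  have b := Module.finBasisOfFinrankEq ℂ M hdim
  have hABli : LinearIndependent ℂ ![(b 0 : Matrix (Fin (N+1)) (Fin (N+1)) ℂ), b 1] := by
    have h1 := b.linearIndependent.map' M.subtype M.ker_subtype
    have h2 : ![(b 0 : Matrix (Fin (N+1)) (Fin (N+1)) ℂ), b 1] = M.subtype ∘ b := by
      funext i
      fin_cases i <;> rfl
    rw [h2]
    exact h1
  have hspan : Submodule.span ℂ {(b 0 : Matrix (Fin (N+1)) (Fin (N+1)) ℂ), (b 1 : Matrix (Fin (N+1)) (Fin (N+1)) ℂ)} = M := by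
    have h1 := congrArg (Submodule.map M.subtype) b.span_eq
    rw [Submodule.map_span, Submodule.map_top, Submodule.range_subtype, ← Set.range_comp] at h1
    refine Eq.trans ?_ h1
    congr 1
    ext x
    simp [Set.mem_range, Fin.exists_fin_two, eq_comm]
  have hmemab : ∀ A ∈ M, ∃ x y : ℂ, x • (b 0 : Matrix (Fin (N+1)) (Fin (N+1)) ℂ) + y • (b 1 : Matrix (Fin (N+1)) (Fin (N+1)) ℂ) = A := by
    intro A hA
    rw [← hspan] at hA
    exact Submodule.mem_span_pair.1 hA
  obtain ⟨ρ, hρ, hanti, hsum, S, hS, hSA, hSB⟩ := fpencil_aux r (N + 1 - 2 * r) (N + 1) (by omega)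
    (b 0 : Matrix (Fin (N+1)) (Fin (N+1)) ℂ) (b 1 : Matrix (Fin (N+1)) (Fin (N+1)) ℂ)
    (hskew _ (b 0).2) (hskew _ (b 1).2)
    (by
      intro x y hxy
      apply hrank _ (M.add_mem (M.smul_mem _ (b 0).2) (M.smul_mem _ (b 1).2))
      intro h0
      have := LinearIndependent.pair_iff.1 hABli x y h0
      rcases hxy with h | h
      · exact h this.1
      · exact h this.2)
    (by
      intro x h1 h2
      have : x ∈ (⨅ A ∈ M, LinearMap.ker (Matrix.mulVecLin A)) := by
        simp only [Submodule.mem_iInf]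
        intro A hA
        obtain ⟨c, d, rfl⟩ := hmemab A hA
        rw [LinearMap.mem_ker, Matrix.mulVecLin_apply, Matrix.add_mulVec, Matrix.smul_mulVec,
          Matrix.smul_mulVec, h1, h2]
        simp
      rw [hker] at this
      exact this)
  exact ⟨ρ, hρ, hanti, hsum, S, hS, b 0, b 1, (b 0).2, (b 1).2, hABli, hspan, hSA, hSB⟩
end

section
/- Let M be a 2-dimensional linear subspace of the space of skew-symmetric (N+1)×(N+1) complex matrices such that every nonzero matrix in M has rank 2r, where r ≥ 1. Then there exist an integer h with 1 ≤ h ≤ r and 2r + h ≤ N+1, a partition r = r₁ + ⋯ + r_h with r₁ ≥ ⋯ ≥ r_h ≥ 1, an invertible complex (N+1)×(N+1) matrix S, and a basis (A, B) of M such that S A Sᵀ and S B Sᵀ are the block-diagonal matrices diag(F_λ(1,0), 0) and diag(F_λ(0,1), 0), where F_λ is the standard pencil of size (2r+h)×(2r+h) associated to the partition and the zero block has size (N+1−2r−h)×(N+1−2r−h). -/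
open Matrix

section Helpers
open Module
lemma finrank_inf_ker {V : Type} [AddCommGroup V] [Module ℂ V] [FiniteDimensional ℂ V]
    (R : Submodule ℂ V) (f : Dual ℂ V) : finrank ℂ R ≤ finrank ℂ ↥(R ⊓ LinearMap.ker f) + 1 := by
  have h1 := LinearMap.finrank_range_add_finrank_ker (f.domRestrict R)
  have h2 : finrank ℂ (LinearMap.range (f.domRestrict R)) ≤ 1 := by
    have := Submodule.finrank_le (LinearMap.range (f.domRestrict R))
    simpa using this
  have h3 : finrank ℂ (LinearMap.ker (f.domRestrict R)) ≤ finrank ℂ ↥(R ⊓ LinearMap.ker f) := by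
    rw [← Submodule.finrank_map_subtype_eq]
    apply Submodule.finrank_mono
    rintro x ⟨y, hy, rfl⟩
    exact ⟨y.2, hy⟩
  omega

lemma exists_eig {V : Type} [AddCommGroup V] [Module ℂ V] [FiniteDimensional ℂ V] [Nontrivial V]
    (A B : V →ₗ[ℂ] V →ₗ[ℂ] ℂ) : ∃ v : V, v ≠ 0 ∧ ∃ ψ : Dual ℂ V, ∃ α β : ℂ,
      A v = α • ψ ∧ B v = β • ψ ∧ ¬ (α = 0 ∧ β = 0) := by
  by_cases hB : Function.Injective B
  · let Be : V ≃ₗ[ℂ] Dual ℂ V := LinearEquiv.ofInjectiveOfFinrankEq B hB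
      (Subspace.dual_finrank_eq).symm
    obtain ⟨μ, hμ⟩ := Module.End.exists_eigenvalue (Be.symm.toLinearMap ∘ₗ A)
    obtain ⟨v, hv⟩ := hμ.exists_hasEigenvector
    refine ⟨v, hv.2, B v, μ, 1, ?_, by simp, by simp⟩
    have := hv.apply_eq_smul
    simp only [LinearMap.comp_apply, LinearEquiv.coe_coe] at this
    rw [LinearEquiv.symm_apply_eq, map_smul] at this
    exact this
  · rw [← LinearMap.ker_eq_bot, Submodule.eq_bot_iff] at hB
    push Not at hB
    obtain ⟨v, hv, hv0⟩ := hB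
    exact ⟨v, hv0, A v, 1, 0, by simp, by simpa using hv, by simp⟩

lemma exists_isotropic (n : ℕ) : ∀ (V : Type) [AddCommGroup V] [Module ℂ V]
    [FiniteDimensional ℂ V] (A B : V →ₗ[ℂ] V →ₗ[ℂ] ℂ) (_ : ∀ x, A x x = 0) (_ : ∀ x, B x x = 0)
    (c : ℤ) (_ : finrank ℂ V = n) (E : Finset ℂ)
    (_ : ∀ s ∉ E, c ≤ finrank ℂ (LinearMap.ker (A + s • B))),
    ∃ K : Submodule ℂ V, (∀ x ∈ K, ∀ y ∈ K, A x y = 0 ∧ B x y = 0) ∧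
      (n : ℤ) + c ≤ 2 * finrank ℂ K := by
  induction n using Nat.strong_induction_on with
  | _ n ih =>
  intro V _ _ _ A B hA hB c hn E hE
  rcases subsingleton_or_nontrivial V with hV | hV
  · refine ⟨⊥, by simp, ?_⟩
    obtain ⟨s, hs⟩ := Infinite.exists_notMem_finset E
    have h1 := hE s hs
    have h2 := Submodule.finrank_le (LinearMap.ker (A + s • B))
    have h3 : finrank ℂ V = 0 := finrank_zero_of_subsingleton
    simp; omega
  obtain ⟨v, hv, ψ, α, β, hAv, hBv, hαβ⟩ := exists_eig A B
  have hAs : ∀ x y, A x y = - A y x := fun x y => by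
    have := hA (x + y); simp [hA] at this; exact eq_neg_of_add_eq_zero_left this
  have hBs : ∀ x y, B x y = - B y x := fun x y => by
    have := hB (x + y); simp [hB] at this; exact eq_neg_of_add_eq_zero_left this
  have hψv : ψ v = 0 := by
    have h1 := hA v; have h2 := hB v
    rw [hAv] at h1; rw [hBv] at h2
    simp at h1 h2; tauto
  obtain ⟨φ, hφ⟩ : ∃ φ : Dual ℂ V, φ v = 1 := by
    obtain ⟨f, hf⟩ : ∃ f : Dual ℂ V, f v ≠ 0 := by
      by_contra! h
      exact hv ((Module.forall_dual_apply_eq_zero_iff ℂ v).1 h)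
    exact ⟨(f v)⁻¹ • f, by simp [hf]⟩
  set P : Submodule ℂ V := LinearMap.ker ψ ⊓ LinearMap.ker φ with hP
  have hvP : v ∉ P := by simp [hP, hφ]
  have hPlt : finrank ℂ P < n := by
    rw [← hn]; apply Submodule.finrank_lt; rintro h; exact hvP (h ▸ Submodule.mem_top)
  have hk : ∀ K' : Submodule ℂ P, finrank ℂ ↥(K'.map P.subtype ⊔ Submodule.span ℂ {v}) = finrank ℂ K' + 1 := by
    intro K'
    have h1 := Submodule.finrank_sup_add_finrank_inf_eq (K'.map P.subtype) (Submodule.span ℂ {v})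
    have h2 : K'.map P.subtype ⊓ Submodule.span ℂ {v} = ⊥ := by
      rw [eq_bot_iff]
      rintro x ⟨hx1, hx2⟩
      obtain ⟨t, rfl⟩ := Submodule.mem_span_singleton.1 hx2
      obtain ⟨y, _, hy⟩ := hx1
      have := y.2.2
      simp at hy
      rw [hy] at this
      simp [hφ] at this
      simp [this]
    rw [h2, Submodule.finrank_map_subtype_eq, finrank_span_singleton hv] at h1
    simpa using h1
  have key : ∀ c' : ℤ, ∀ E' : Finset ℂ, (∀ s ∉ E', c' ≤ finrank ℂ (LinearMap.ker (A.domRestrict₁₂ P P + s • B.domRestrict₁₂ P P))) →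
      (n : ℤ) + c ≤ finrank ℂ P + c' + 2 → ∃ K : Submodule ℂ V, (∀ x ∈ K, ∀ y ∈ K, A x y = 0 ∧ B x y = 0) ∧
      (n : ℤ) + c ≤ 2 * finrank ℂ K := by
    intro c' E' h1 h2
    obtain ⟨K', hK1, hK2⟩ := ih _ hPlt P (A.domRestrict₁₂ P P) (B.domRestrict₁₂ P P) (fun x => hA x) (fun x => hB x) c' rfl E' h1
    refine ⟨K'.map P.subtype ⊔ Submodule.span ℂ {v}, ?_, by rw [hk]; push_cast; omega⟩
    intro x hx y hy
    obtain ⟨_, ⟨x', hx', rfl⟩, x2, hx2, rfl⟩ := Submodule.mem_sup.1 hx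
    obtain ⟨_, ⟨y', hy', rfl⟩, y2, hy2, rfl⟩ := Submodule.mem_sup.1 hy
    obtain ⟨t, rfl⟩ := Submodule.mem_span_singleton.1 hx2
    obtain ⟨t', rfl⟩ := Submodule.mem_span_singleton.1 hy2
    have hx3 : ψ x' = 0 := x'.2.1
    have hy3 : ψ y' = 0 := y'.2.1
    have := hK1 x' hx' y' hy'
    simp only [LinearMap.domRestrict₁₂_apply] at this
    have e1 : A x' v = 0 := by rw [hAs, hAv]; simp [hx3]
    have e2 : B x' v = 0 := by rw [hBs, hBv]; simp [hx3]
    simp [this, e1, e2, hAv, hBv, hy3, hψv]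
  by_cases hψ : ψ = 0
  · subst hψ
    have hPn := finrank_inf_ker (⊤ : Submodule ℂ V) φ
    have hP' : P = ⊤ ⊓ LinearMap.ker φ := by simp [hP]
    rw [← hP', finrank_top, hn] at hPn
    refine key (c - 1) E ?_ (by omega)
    intro s hs
    have h1 := hE s hs
    have h2 := finrank_inf_ker (LinearMap.ker (A + s • B)) φ
    have h3 : finrank ℂ ↥(LinearMap.ker (A + s • B) ⊓ LinearMap.ker φ) ≤ finrank ℂ (LinearMap.ker (A.domRestrict₁₂ P P + s • B.domRestrict₁₂ P P)) := by
      rw [← Submodule.finrank_map_subtype_eq P]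
      apply Submodule.finrank_mono
      rintro x ⟨hx1, hx2⟩
      refine ⟨⟨x, by simp, hx2⟩, ?_, rfl⟩
      simp only [SetLike.mem_coe, LinearMap.mem_ker] at hx1 ⊢
      ext y
      exact LinearMap.congr_fun hx1 (y : V)
    omega
  · have hPn := finrank_inf_ker (⊤ : Submodule ℂ V) ψ
    have hPn2 := finrank_inf_ker (LinearMap.ker ψ) φ
    rw [top_inf_eq, finrank_top, hn] at hPn
    refine key c (insert (-α / β) E) ?_ (by rw [hP]; omega)
    intro s hs
    simp only [Finset.mem_insert, not_or] at hs
    have hs1 : α + s * β ≠ 0 := by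
      intro h
      by_cases hb : β = 0
      · subst hb; simp at h; exact hαβ ⟨h, rfl⟩
      · apply hs.1; field_simp; linear_combination h
    refine (hE s hs.2).trans ?_
    have hsv : ∀ y, (A + s • B) v y = (α + s * β) * ψ y := fun y => by
      simp [hAv, hBv]; ring
    set R := LinearMap.ker (A + s • B) with hR
    let f : V →ₗ[ℂ] V := LinearMap.id - φ.smulRight v
    have hRψ : ∀ x ∈ R, ψ x = 0 := by
      intro x hx
      have h1 : (A + s • B) x v = 0 := by rw [LinearMap.mem_ker.1 hx]; simp
      have h2 := hsv x
      have h3 : (A + s • B) v x = - (A + s • B) x v := by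
        simp [hAs v x, hBs v x]; ring
      rw [h3, h1] at h2
      simp [hs1] at h2; exact h2
    have hinj : Function.Injective (f.domRestrict R) := by
      rw [← LinearMap.ker_eq_bot, Submodule.eq_bot_iff]
      rintro ⟨x, hx⟩ hfx
      have h1 : x = φ x • v := by
        have := LinearMap.mem_ker.1 hfx
        simpa [f, sub_eq_zero] using this
      obtain ⟨y, hy⟩ : ∃ y, ψ y ≠ 0 := by
        by_contra! h; exact hψ (LinearMap.ext h)
      have h2 : (A + s • B) x y = 0 := by rw [LinearMap.mem_ker.1 hx]; simp
      rw [h1, map_smul, LinearMap.smul_apply, hsv] at h2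
      simp [hs1, hy] at h2
      rw [h2] at h1
      simpa using h1
    have h4 := LinearMap.finrank_range_of_inj hinj
    rw [← h4, ← Submodule.finrank_map_subtype_eq P]
    norm_cast
    apply Submodule.finrank_mono
    rintro _ ⟨⟨x, hx⟩, rfl⟩
    have hm : f x ∈ P := by
      constructor
      · simp [f, hRψ x hx, hψv]
      · simp [f, hφ]
    refine ⟨⟨f x, hm⟩, ?_, rfl⟩
    simp only [SetLike.mem_coe, LinearMap.mem_ker]
    ext y
    have h5 : (A + s • B) (f x) y = 0 := by
      have hy : ψ y = 0 := y.2.1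
      simp only [f, LinearMap.sub_apply, map_sub, LinearMap.id_apply, LinearMap.smulRight_apply, map_smul, LinearMap.smul_apply, hsv, hy]
      rw [LinearMap.mem_ker.1 hx]; simp
    exact h5

lemma li_congr {Y ι : Type} [AddCommGroup Y] [Module ℂ Y] {f g : ι → Y}
    (hg : LinearIndependent ℂ g) (h : ∀ i, f i = g i) : LinearIndependent ℂ f := by
  obtain rfl : f = g := funext h
  exact hg

lemma ext_indep {Z ι : Type} [AddCommGroup Z] [Module ℂ Z] [FiniteDimensional ℂ Z] [Fintype ι]
    (v : ι → Z) (hv : LinearIndependent ℂ v) : ∃ k : ℕ, ∃ g : Fin k → Z,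
      LinearIndependent ℂ (Sum.elim v g) ∧ Fintype.card ι + k = finrank ℂ Z := by
  set C := Submodule.span ℂ (Set.range v) with hC
  let b := finBasis ℂ (Z ⧸ C)
  choose g hg using fun i => Submodule.Quotient.mk_surjective C (b i)
  refine ⟨_, g, ?_, ?_⟩
  · have h1 : LinearIndependent ℂ (fun i => (⟨v i, Submodule.subset_span ⟨i, rfl⟩⟩ : C)) := by
      apply LinearIndependent.of_comp C.subtype
      exact hv
    have := LinearIndependent.sumElim_of_quotient h1 g (by
      have : (Submodule.Quotient.mk (p := C)) ∘ g = b := funext hg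
      rw [this]; exact b.linearIndependent)
    exact this
  · rw [← finrank_span_eq_card hv, add_comm]
    exact Submodule.finrank_quotient_add_finrank C

lemma full_indep {Y ι : Type} [AddCommGroup Y] [Module ℂ Y] (D : Submodule ℂ Y) (ρ : ι → ℕ)
    (e : ι → ℕ → Y) (hD : ∀ i s, s < ρ i → e i s ∈ D)
    (h1 : LinearIndependent ℂ (fun p : Σ i, Fin (ρ i) => e p.1 p.2))
    (h2 : LinearIndependent ℂ (fun i => D.mkQ (e i (ρ i)))) :
    LinearIndependent ℂ (fun p : Σ i, Fin (ρ i + 1) => e p.1 p.2) := by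
  have h1' : LinearIndependent ℂ (fun p : Σ i, Fin (ρ i) => (⟨e p.1 p.2, hD _ _ p.2.2⟩ : D)) := by
    apply LinearIndependent.of_comp D.subtype
    exact h1
  have h3 := LinearIndependent.sumElim_of_quotient h1' (fun i => e i (ρ i)) h2
  let F : (Σ i, Fin (ρ i + 1)) → (Σ i, Fin (ρ i)) ⊕ ι := fun p =>
    if h : (p.2 : ℕ) < ρ p.1 then Sum.inl ⟨p.1, p.2, h⟩ else Sum.inr p.1
  have hF : Function.Injective F := by
    rintro ⟨i, s, hs⟩ ⟨j, t, ht⟩ h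
    simp only [F] at h
    split_ifs at h with a b b
    · simp only [Sum.inl.injEq, Sigma.mk.injEq] at h
      obtain ⟨rfl, h⟩ := h
      simpa using h
    · simp only [Sum.inr.injEq] at h
      subst h
      simp
      omega
  have h4 := h3.comp F hF
  refine li_congr h4 fun p => ?_
  simp only [Function.comp, F]
  split_ifs with h
  · rfl
  · have := p.2.2
    have h5 : (p.2 : ℕ) = ρ p.1 := by omega
    simp [h5]

lemma chains (n : ℕ) : ∀ (Y : Type) [AddCommGroup Y] [Module ℂ Y] [FiniteDimensional ℂ Y]
    (_ : finrank ℂ Y = n) (D : Submodule ℂ Y) (T : D →ₗ[ℂ] Y)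
    (_ : ∀ (c : ℂ) (x : D), T x = c • (x : Y) → x = 0),
    ∃ (ι : Type) (_ : Fintype ι) (ρ : ι → ℕ) (e : ι → ℕ → Y),
      (∀ i s, s < ρ i → ∃ h : e i s ∈ D, T ⟨e i s, h⟩ = e i (s + 1)) ∧
      LinearIndependent ℂ (fun p : Σ i, Fin (ρ i) => e p.1 p.2) ∧
      LinearIndependent ℂ (fun i => D.mkQ (e i (ρ i))) ∧
      ∑ i, ρ i = finrank ℂ D ∧ ∑ i, (ρ i + 1) = finrank ℂ Y := by
  induction n using Nat.strong_induction_on with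
  | _ n ih =>
  intro Y _ _ _ hn D T hT
  by_cases hD : D = ⊤
  · subst hD
    have hY : Subsingleton Y := by
      by_contra hY
      rw [not_subsingleton_iff_nontrivial] at hY
      obtain ⟨μ, hμ⟩ := Module.End.exists_eigenvalue (T ∘ₗ (Submodule.topEquiv (R := ℂ) (M := Y)).symm.toLinearMap)
      obtain ⟨v, hv⟩ := hμ.exists_hasEigenvector
      have h1 := hv.apply_eq_smul
      have h2 := hT μ ⟨v, trivial⟩ h1
      exact hv.2 (congrArg Subtype.val h2)
    have h0 : finrank ℂ Y = 0 := finrank_zero_of_subsingleton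
    exact ⟨Empty, inferInstance, fun _ => 0, fun _ _ => 0, fun i => i.elim,
      linearIndependent_empty_type, linearIndependent_empty_type, by simp [h0], by simp [h0]⟩
  have hlt : finrank ℂ D < n := hn ▸ Submodule.finrank_lt hD
  let D' : Submodule ℂ D := D.comap T
  let T' : D' →ₗ[ℂ] D := (T ∘ₗ D'.subtype).codRestrict D (fun x => x.2)
  obtain ⟨ι, _, ρ, e, h1, h2, h3, h4, h5⟩ := ih _ hlt D rfl D' T' (by
    intro c x hx
    have := hT c x (congrArg Subtype.val hx)
    exact Subtype.ext this)
  have hfull := full_indep D' ρ e (fun i s hs => (h1 i s hs).1) h2 h3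
  have hq : LinearIndependent ℂ (fun i => D.mkQ (T (e i (ρ i)))) := by
    have hle : D' ≤ D.comap T := le_rfl
    have := h3.map' (D'.mapQ D T hle) (by
      rw [Submodule.ker_mapQ]
      simp [D'])
    exact this
  obtain ⟨k, g, hg1, hg2⟩ := ext_indep _ hq
  choose g' hg' using fun i => Submodule.mkQ_surjective D (g i)
  refine ⟨ι ⊕ Fin k, inferInstance, Sum.elim (fun i => ρ i + 1) (fun _ => 0),
    Sum.elim (fun i s => if s ≤ ρ i then (e i s : Y) else T (e i (ρ i))) (fun i _ => g' i),
    ?_, ?_, ?_, ?_, ?_⟩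
  · rintro (i | i) s hs
    · simp only [Sum.elim_inl] at hs ⊢
      have hs' : s ≤ ρ i := by omega
      have e1 : (if s ≤ ρ i then (e i s : Y) else T (e i (ρ i))) = e i s := if_pos hs'
      have e3 : (if s ≤ ρ i then (e i s : Y) else T (e i (ρ i))) ∈ D := by rw [e1]; exact (e i s).2
      refine ⟨e3, ?_⟩
      have e2 : T ⟨(if s ≤ ρ i then (e i s : Y) else T (e i (ρ i))), e3⟩ = T (e i s) :=
        congrArg T (Subtype.ext e1)
      refine e2.trans ?_
      rcases hs'.lt_or_eq with h | rfl
      · rw [if_pos (by omega)]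
        obtain ⟨h6, h7⟩ := h1 i s h
        exact congrArg Subtype.val h7
      · rw [if_neg (by omega)]
    · simp at hs
  · let F : (Σ i : ι ⊕ Fin k, Fin (Sum.elim (fun i => ρ i + 1) (fun _ => 0) i)) → (Σ i, Fin (ρ i + 1)) :=
      fun p => match p with
      | ⟨.inl i, s⟩ => ⟨i, s⟩
      | ⟨.inr i, s⟩ => s.elim0
    have hF : Function.Injective F := by
      rintro ⟨i | i, s⟩ ⟨j | j, t⟩ h
      · simp only [F] at h
        obtain ⟨rfl, h⟩ := h
        simpa using h
      · exact t.elim0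
      · exact s.elim0
      · exact s.elim0
    have h6 := (hfull.map' D.subtype (Submodule.ker_subtype D)).comp F hF
    refine li_congr h6 fun p => ?_
    rcases p with ⟨i | i, s, hs⟩
    · simp only [Sum.elim_inl] at hs
      have : s ≤ ρ i := by omega
      simp [F, this]
    · simp at hs
  · refine li_congr hg1 fun i => ?_
    rcases i with i | i
    · simp
    · simp [← hg']
  · simp [h5]
  · have h6 := Submodule.finrank_quotient_add_finrank D
    simp only [Fintype.sum_sum_type, Sum.elim_inl, Sum.elim_inr, Finset.sum_add_distrib] at h5 ⊢
    simp at h5 hg2 ⊢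
    omega

lemma kill {ι : Type} (α β : ι → ℕ → ι → ℕ → ℂ)
    (hα : ∀ i s j u, α i s j u = - α j u i s) (hβ : ∀ i s j u, β i s j u = - β j u i s) :
    ∃ X : ι → ℕ → ι → ℕ → ℂ, ∀ i s j u, X i s j u - X j u i s = α i s j u ∧
      X i s j (u + 1) - X j u i (s + 1) = β i s j u := by
  let γ : ι → ℕ → ι → ℕ → ℂ := fun i s j u => β i s j u - α i (s+1) j u / 2 - α i s j (u+1) / 2
  let Z : ι → ℕ → ι → ℕ → ℂ := fun i s j u => ∑ k ∈ Finset.range u, γ i (s + k) j (u - 1 - k)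
  have hZ : ∀ i s j u, Z i s j (u + 1) = Z i (s + 1) j u + γ i s j u := by
    intro i s j u
    simp only [Z]
    rw [Finset.sum_range_succ']
    congr 1
    apply Finset.sum_congr rfl
    intro k hk
    rw [Finset.mem_range] at hk
    congr 1 <;> omega
  refine ⟨fun i s j u => (Z i s j u + Z j u i s) / 2 + α i s j u / 2, fun i s j u => ⟨?_, ?_⟩⟩
  · simp only []
    linear_combination - (1/2) * hα j u i s
  · simp only []
    have h1 := hZ i s j u
    have h2 := hZ j u i s
    simp only [γ] at h1 h2
    linear_combination (1/2) * h1 - (1/2) * h2 - (1/2) * hβ j u i s + (1/4) * hα j (u+1) i s - (1/4) * hα j u i (s+1)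

lemma perp_bound {V : Type} [AddCommGroup V] [Module ℂ V] [FiniteDimensional ℂ V]
    (C : V →ₗ[ℂ] V →ₗ[ℂ] ℂ) (K : Submodule ℂ V) (L : Submodule ℂ V)
    (hL : ∀ x ∈ L, ∀ y ∈ K, C x y = 0) :
    finrank ℂ L + finrank ℂ K ≤ finrank ℂ V + finrank ℂ (LinearMap.ker C) := by
  have h1 := LinearMap.finrank_range_add_finrank_ker (C.domRestrict L)
  have h2 : finrank ℂ (LinearMap.range (C.domRestrict L)) ≤ finrank ℂ K.dualAnnihilator := by
    apply Submodule.finrank_mono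
    rintro _ ⟨x, rfl⟩
    rw [Submodule.mem_dualAnnihilator]
    exact fun y hy => hL x x.2 y hy
  have h3 := Subspace.finrank_add_finrank_dualAnnihilator_eq K
  have h4 : finrank ℂ (LinearMap.ker (C.domRestrict L)) ≤ finrank ℂ (LinearMap.ker C) := by
    rw [← Submodule.finrank_map_subtype_eq]
    apply Submodule.finrank_mono
    rintro x ⟨y, hy, rfl⟩
    exact hy
  omega

open scoped Classical in
lemma sum_ind {ι : Type} [Fintype ι] (ρ : ι → ℕ) (X : ι → ℕ → ℂ) (i : ι) (s : ℕ) (hs : s < ρ i + 1) :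
    ∑ q : Σ i, Fin (ρ i + 1), X q.1 q.2 * (if i = q.1 ∧ s = (q.2 : ℕ) then 1 else 0) = X i s := by
  rw [Finset.sum_eq_single ⟨i, s, hs⟩]
  · simp
  · rintro ⟨j, t⟩ _ h
    rw [if_neg, mul_zero]
    rintro ⟨rfl, h2⟩
    apply h
    simp only [Sigma.mk.injEq, heq_eq_eq, true_and]
    exact Fin.ext h2.symm
  · simp

open scoped Classical in
theorem pencil {V : Type} [AddCommGroup V] [Module ℂ V] [FiniteDimensional ℂ V]
    (A B : V →ₗ[ℂ] V →ₗ[ℂ] ℂ) (hA : ∀ x, A x x = 0) (hB : ∀ x, B x x = 0) (r : ℕ)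
    (hrank : ∀ a b : ℂ, ¬ (a = 0 ∧ b = 0) →
      finrank ℂ (LinearMap.ker (a • A + b • B)) + 2 * r = finrank ℂ V) :
    ∃ (ι : Type) (_ : Fintype ι) (ρ : ι → ℕ) (e k : ι → ℕ → V),
      ∑ i, ρ i = r ∧ ∑ i, (ρ i + 1) + r = finrank ℂ V ∧
      LinearIndependent ℂ (Sum.elim (fun p : Σ i, Fin (ρ i) => e p.1 p.2)
        (fun p : Σ i, Fin (ρ i + 1) => k p.1 p.2)) ∧
      (∀ i s j t, s < ρ i → t < ρ j → A (e i s) (e j t) = 0 ∧ B (e i s) (e j t) = 0) ∧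
      (∀ i s j t, A (k i s) (k j t) = 0 ∧ B (k i s) (k j t) = 0) ∧
      (∀ i s j t, s < ρ i → t < ρ j + 1 → A (e i s) (k j t) = (if i = j ∧ s = t then 1 else 0) ∧
        B (e i s) (k j t) = (if i = j ∧ s + 1 = t then 1 else 0)) := by
  have hAs : ∀ x y, A x y = - A y x := fun x y => by
    have := hA (x + y); simp [hA] at this; exact eq_neg_of_add_eq_zero_left this
  have hBs : ∀ x y, B x y = - B y x := fun x y => by
    have := hB (x + y); simp [hB] at this; exact eq_neg_of_add_eq_zero_left this
  obtain ⟨K, hK, hKd⟩ := exists_isotropic _ V A B hA hB ((finrank ℂ V : ℤ) - 2 * r) rfl ∅ (by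
    intro s _
    have := hrank 1 s (by simp)
    rw [one_smul] at this
    omega)
  have hkr : finrank ℂ K + r = finrank ℂ V := by
    have h1 := perp_bound ((1:ℂ) • A + (0:ℂ) • B) K K (fun x hx y hy => by simp [hK x hx y hy])
    have h2 := hrank 1 0 (by simp)
    omega
  obtain ⟨W, hW⟩ := Submodule.exists_isCompl K
  have hWr : finrank ℂ W = r := by
    have := Submodule.finrank_add_eq_of_isCompl hW
    omega
  have hinj : ∀ a b : ℂ, ¬ (a = 0 ∧ b = 0) → ∀ w ∈ W, (∀ x ∈ K, a * A w x + b * B w x = 0) → w = 0 := by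
    intro a b hab w hw hx
    have h1 := perp_bound (a • A + b • B) K (K ⊔ Submodule.span ℂ {w}) (by
      intro x hx' y hy
      obtain ⟨x1, hx1, x2, hx2, rfl⟩ := Submodule.mem_sup.1 hx'
      obtain ⟨t, rfl⟩ := Submodule.mem_span_singleton.1 hx2
      have h3 := hx y hy
      simp [hK x1 hx1 y hy]
      linear_combination t * h3)
    have h2 := hrank a b hab
    have h3 : K = K ⊔ Submodule.span ℂ {w} := Submodule.eq_of_le_of_finrank_le le_sup_left (by omega)
    have h4 : w ∈ K := by
      rw [h3]; exact Submodule.mem_sup_right (Submodule.mem_span_singleton_self w)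
    exact (Submodule.disjoint_def.1 hW.disjoint) w h4 hw
  let FA : W →ₗ[ℂ] Dual ℂ K := A.domRestrict₁₂ W K
  let FB : W →ₗ[ℂ] Dual ℂ K := B.domRestrict₁₂ W K
  have hFA : Function.Injective FA := by
    rw [← LinearMap.ker_eq_bot, Submodule.eq_bot_iff]
    intro w hw
    apply Subtype.ext
    refine hinj 1 0 (by simp) w w.2 fun x hx => ?_
    have : A w x = 0 := LinearMap.congr_fun hw ⟨x, hx⟩
    simp [this]
  let FAe := LinearEquiv.ofInjective FA hFA
  obtain ⟨ι, _, ρ, f, h1, h2, h3, h4, h5⟩ := chains _ (Dual ℂ K) rfl (LinearMap.range FA)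
    (FB ∘ₗ FAe.symm.toLinearMap) (by
      intro c x hx
      obtain ⟨w, rfl⟩ := FAe.surjective x
      simp only [LinearMap.comp_apply, LinearEquiv.coe_coe, LinearEquiv.symm_apply_apply] at hx
      have : (w : V) = 0 := by
        refine hinj c (-1) (by simp) w w.2 fun x hx' => ?_
        have h : B w x = c * A w x := LinearMap.congr_fun hx ⟨x, hx'⟩
        rw [h]; ring
      rw [show w = 0 from Subtype.ext this, map_zero])
  rw [Subspace.dual_finrank_eq] at h5
  rw [LinearMap.finrank_range_of_inj hFA, hWr] at h4
  have hfull := full_indep _ ρ f (fun i s hs => (h1 i s hs).1) h2 h3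
  have hcard : Fintype.card (Σ i, Fin (ρ i + 1)) = finrank ℂ (Dual ℂ K) := by
    rw [Subspace.dual_finrank_eq, ← h5]; simp
  have hspan := hfull.span_eq_top_of_card_eq_finrank' hcard
  let bf : Basis (Σ i, Fin (ρ i + 1)) ℂ (Dual ℂ K) := Basis.mk hfull hspan.ge
  have hbf : ∀ p, bf p = f p.1 p.2 := fun p => by simp [bf]
  let bk : Basis (Σ i, Fin (ρ i + 1)) ℂ K := bf.dualBasis.map (evalEquiv ℂ K).symm
  have hbk : ∀ p q, (f p.1 p.2) (bk q) = if p = q then 1 else 0 := by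
    intro p q
    rw [← hbf]
    have : (evalEquiv ℂ K (bk q)) (bf p) = bf.dualBasis q (bf p) := by simp [bk]
    rw [Basis.dualBasis_apply_self] at this
    simpa using this
  let k : ι → ℕ → V := fun i s => if h : s < ρ i + 1 then bk ⟨i, s, h⟩ else 0
  have hkK : ∀ i s, k i s ∈ K := by
    intro i s; simp only [k]; split_ifs
    · exact Subtype.mem _
    · exact K.zero_mem
  let e : ι → ℕ → V := fun i s => if h : s < ρ i then FAe.symm ⟨f i s, (h1 i s h).1⟩ else 0
  have hek : ∀ i s j t, s < ρ i → t < ρ j + 1 → A (e i s) (k j t) = (if i = j ∧ s = t then 1 else 0) ∧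
        B (e i s) (k j t) = (if i = j ∧ s + 1 = t then 1 else 0) := by
    intro i s j t hs ht
    simp only [e, k, hs, ht, dif_pos]
    obtain ⟨hm, hT⟩ := h1 i s hs
    have q1 : FA (FAe.symm ⟨f i s, hm⟩) = f i s :=
      congrArg Subtype.val (FAe.apply_symm_apply ⟨f i s, hm⟩)
    have q2 : FB (FAe.symm ⟨f i s, hm⟩) = f i (s+1) := hT
    have e1 := LinearMap.congr_fun q1 (bk ⟨j, t, ht⟩)
    have e2 := LinearMap.congr_fun q2 (bk ⟨j, t, ht⟩)
    have hh : ∀ s', s' < ρ i + 1 → f i s' (bk ⟨j, t, ht⟩) = if i = j ∧ s' = t then 1 else 0 := by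
      intro s' hs'
      rw [hbk ⟨i, s', hs'⟩]
      congr 1
      simp only [Sigma.mk.injEq, eq_iff_iff]
      constructor
      · rintro ⟨rfl, h⟩
        exact ⟨rfl, by simpa using h⟩
      · rintro ⟨rfl, rfl⟩
        simp
    rw [hh s (by omega)] at e1
    rw [hh (s+1) (by omega)] at e2
    exact ⟨e1, e2⟩
  obtain ⟨X, hX⟩ := kill (fun i s j t => A (e i s) (e j t)) (fun i s j t => B (e i s) (e j t))
    (fun i s j t => hAs _ _) (fun i s j t => hBs _ _)
  let z : ι → ℕ → V := fun i s => ∑ q : Σ i, Fin (ρ i + 1), X i s q.1 q.2 • k q.1 q.2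
  have hzK : ∀ i s, z i s ∈ K := fun i s => Submodule.sum_mem _ fun q _ => Submodule.smul_mem _ _ (hkK _ _)
  have hAz : ∀ i s j t, s < ρ i → A (e i s) (z j t) = X j t i s := by
    intro i s j t hs
    simp only [z, map_sum, map_smul, smul_eq_mul]
    rw [← sum_ind ρ (X j t) i s (by omega)]
    exact Finset.sum_congr rfl fun q _ => by rw [(hek i s q.1 q.2 hs q.2.2).1]
  have hBz : ∀ i s j t, s < ρ i → B (e i s) (z j t) = X j t i (s+1) := by
    intro i s j t hs
    simp only [z, map_sum, map_smul, smul_eq_mul]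
    rw [← sum_ind ρ (X j t) i (s+1) (by omega)]
    exact Finset.sum_congr rfl fun q _ => by rw [(hek i s q.1 q.2 hs q.2.2).2]
  have hek' : ∀ i s j t, s < ρ i → t < ρ j + 1 → A (e i s + z i s) (k j t) = (if i = j ∧ s = t then 1 else 0) ∧
        B (e i s + z i s) (k j t) = (if i = j ∧ s + 1 = t then 1 else 0) := by
    intro i s j t hs ht
    have := hK _ (hzK i s) _ (hkK j t)
    simp only [map_add, LinearMap.add_apply, this, add_zero]
    exact hek i s j t hs ht
  refine ⟨ι, inferInstance, ρ, fun i s => e i s + z i s, k, h4, by omega, ?_, ?_, ?_, ?_⟩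
  · rw [Fintype.linearIndependent_iff]
    intro g hg
    simp only [Fintype.sum_sum_type, Sum.elim_inl, Sum.elim_inr] at hg
    have hl : ∀ p, g (Sum.inl p) = 0 := by
      rintro ⟨j, t⟩
      have := congrArg (fun x => A x (k j t)) hg
      simp only [map_add, map_sum, LinearMap.add_apply, LinearMap.sum_apply, map_smul, LinearMap.smul_apply,
        (hK _ (hkK _ _) _ (hkK j t)).1, (hK _ (hzK _ _) _ (hkK j t)).1, smul_zero, Finset.sum_const_zero, add_zero, map_zero, LinearMap.zero_apply] at this
      rw [Finset.sum_eq_single ⟨j, t⟩] at this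
      · have h6 := (hek' j t j t t.2 (by omega)).1
        simp only [map_add, LinearMap.add_apply] at h6
        rw [(hK _ (hzK _ _) _ (hkK _ _)).1, add_zero] at h6
        simpa [h6] using this
      · rintro ⟨i, s⟩ _ hne
        have h6 := (hek' i s j t s.2 (by omega)).1
        simp only [map_add, LinearMap.add_apply] at h6
        rw [(hK _ (hzK _ _) _ (hkK _ _)).1, add_zero] at h6
        rw [h6, if_neg, smul_zero]
        rintro ⟨rfl, h7⟩
        exact hne (by simp [Fin.ext h7])
      · simp
    simp only [hl, zero_smul, Finset.sum_const_zero, zero_add] at hg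
    have hki : LinearIndependent ℂ (fun p : Σ i, Fin (ρ i + 1) => k p.1 p.2) := by
      refine li_congr (bk.linearIndependent.map' K.subtype (Submodule.ker_subtype K)) fun p => ?_
      have := p.2.2
      simp [k]
      omega
    rintro (p | p)
    · exact hl p
    · exact Fintype.linearIndependent_iff.1 hki (fun p => g (Sum.inr p)) hg p
  · intro i s j t hs ht
    have h6 := hX i s j t
    have h7 := hK _ (hzK i s) _ (hzK j t)
    simp only [map_add, LinearMap.add_apply, h7, hAz i s j t hs, hBz i s j t hs, hAs (z i s), hBs (z i s),
      hAz j t i s ht, hBz j t i s ht]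
    constructor
    · linear_combination -h6.1
    · linear_combination -h6.2
  · exact fun i s j t => hK _ (hkK _ _) _ (hkK _ _)
  · exact hek'

end Helpers

lemma decode (P g : ℕ → ℕ) (hP : ∀ i, P (i+1) = P i + g i) {i j s t : ℕ} (hs : s < g i) (ht : t < g j) :
    P i + s = P j + t ↔ i = j ∧ s = t := by
  have hm : Monotone P := monotone_nat_of_le_succ fun i => by rw [hP]; omega
  constructor
  · intro h
    rcases lt_trichotomy i j with h1 | h1 | h1
    · have h2 : P (i+1) ≤ P j := hm h1
      rw [hP] at h2; omega
    · subst h1; exact ⟨rfl, by omega⟩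
    · have h2 : P (j+1) ≤ P i := hm h1
      rw [hP] at h2; omega
  · rintro ⟨rfl, rfl⟩; rfl

open scoped Classical in
noncomputable def fbNat {h : ℕ} (rpart : Fin h → ℕ) (a b : ℂ) (s t : ℕ) : ℂ :=
    if ∃ i : Fin h, partialSum rpart i ≤ s ∧ s < partialSum rpart (i.val + 1) ∧
        t = s + i.val then a
    else if ∃ i : Fin h, partialSum rpart i ≤ s ∧ s < partialSum rpart (i.val + 1) ∧
        t = s + i.val + 1 then b
    else 0

noncomputable def penNat {h : ℕ} (rpart : Fin h → ℕ) (r : ℕ) (a b : ℂ) (p q : ℕ) : ℂ :=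
  if p < r then (if r ≤ q then fbNat rpart a b p (q - r) else 0)
  else (if q < r then - fbNat rpart a b q (p - r) else 0)

lemma fbNat_big {h : ℕ} (rpart : Fin h → ℕ) (r : ℕ) (a b : ℂ) (s t : ℕ) (hs : s < r)
    (ht : r + h ≤ t) : fbNat rpart a b s t = 0 := by
  unfold fbNat
  rw [if_neg, if_neg]
  · rintro ⟨i, -, -, h1⟩
    have := i.2; omega
  · rintro ⟨i, -, -, h1⟩
    have := i.2; omega

lemma Fpencil_apply {h : ℕ} (rpart : Fin h → ℕ) (r : ℕ) (a b : ℂ) (p q : Fin (2*r+h)) :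
    Fpencil rpart r a b p q = penNat rpart r a b p q := by
  unfold Fpencil
  obtain ⟨x, rfl⟩ := (finSumFinEquiv.trans (finCongr (by omega : r + (r + h) = 2*r+h))).surjective p
  obtain ⟨y, rfl⟩ := (finSumFinEquiv.trans (finCongr (by omega : r + (r + h) = 2*r+h))).surjective q
  rw [Matrix.reindex_apply, Matrix.submatrix_apply, Equiv.symm_apply_apply, Equiv.symm_apply_apply]
  rcases x with x | x <;> rcases y with y | y
  · simp [penNat]
  · simp [penNat]
    rfl
  · simp [penNat]
    rfl
  · simp [penNat]

lemma target_apply {h N : ℕ} (rpart : Fin h → ℕ) (r : ℕ) (a b : ℂ) 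
    (e : (2*r+h) + (N + 1 - (2*r + h)) = N + 1) (p q : Fin (N+1)) :
    Matrix.reindex (finSumFinEquiv.trans (finCongr e))
          (finSumFinEquiv.trans (finCongr e))
          (Matrix.fromBlocks (Fpencil rpart r a b) 0 0
            (0 : Matrix (Fin (N + 1 - (2*r + h))) (Fin (N + 1 - (2*r + h))) ℂ)) p q
      = penNat rpart r a b p q := by
  obtain ⟨x, rfl⟩ := (finSumFinEquiv.trans (finCongr e)).surjective p
  obtain ⟨y, rfl⟩ := (finSumFinEquiv.trans (finCongr e)).surjective q
  rw [Matrix.reindex_apply, Matrix.submatrix_apply, Equiv.symm_apply_apply, Equiv.symm_apply_apply]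
  rcases x with x | x <;> rcases y with y | y
  · simp [Fpencil_apply]
  · simp [penNat]
    split_ifs <;> try rfl
    · rw [fbNat_big (r := r)] <;> omega
    · omega
  · simp [penNat]
    split_ifs <;> try rfl
    · omega
    · rw [fbNat_big (r := r)] <;> first | omega | simp
  · simp [penNat]
    split_ifs <;> first | rfl | omega

lemma fbNat_eq {h : ℕ} (rpart : Fin h → ℕ) (g : ℕ → ℕ) (hg : ∀ i : ℕ, i < h ↔ 0 < g i)
    (hP : ∀ i, partialSum rpart (i+1) = partialSum rpart i + g i) (a b : ℂ) (i j s u : ℕ) (hs : s < g i)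
    (hu : u < g j + 1) :
    fbNat rpart a b (partialSum rpart i + s) (partialSum rpart j + j + u) =
      if i = j ∧ s = u then a else if i = j ∧ s + 1 = u then b else 0 := by
  have hi : i < h := (hg i).2 (by omega)
  have key : ∀ c : ℕ, s + c < g i + 1 → ((∃ i' : Fin h, partialSum rpart i' ≤ partialSum rpart i + s ∧
      partialSum rpart i + s < partialSum rpart (i'.val + 1) ∧
      partialSum rpart j + j + u = partialSum rpart i + s + i'.val + c) ↔ (i = j ∧ s + c = u)) := by
    intro c hc
    have hQ := decode (fun i => partialSum rpart i + i) (fun i => g i + 1)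
      (fun i => by simp only [hP]; omega) (i := i) (j := j) hc hu
    rw [← hQ]
    constructor
    · rintro ⟨i', h1, h2, h3⟩
      rw [hP] at h2
      have := (decode (partialSum rpart) g hP (i := i) (j := i') (s := s)
        (t := partialSum rpart i + s - partialSum rpart i') hs (by omega)).1 (by omega)
      rw [← this.1] at h3
      omega
    · intro h3
      refine ⟨⟨i, hi⟩, by simp, by simp only [hP]; omega, by simp only []; omega⟩
  have k0 := key 0 (by omega)
  have k1 := key 1 (by omega)
  simp only [add_zero] at k0
  unfold fbNat
  simp only [k0, k1]

lemma exists_sorted {ι : Type} [Fintype ι] (ρ : ι → ℕ) :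
    ∃ m : ℕ, ∃ σ : Fin m ≃ ι, Antitone (ρ ∘ σ) := by
  let f : Fin (Fintype.card ι) → ℕᵒᵈ := fun i => OrderDual.toDual (ρ ((Fintype.equivFin ι).symm i))
  refine ⟨_, (Tuple.sort f).trans (Fintype.equivFin ι).symm, ?_⟩
  exact Tuple.monotone_sort f

noncomputable def frm {n : ℕ} (C : Matrix (Fin n) (Fin n) ℂ) :
    (Fin n → ℂ) →ₗ[ℂ] (Fin n → ℂ) →ₗ[ℂ] ℂ := Matrix.toLinearMap₂' ℂ C

lemma frm_apply {n : ℕ} (C : Matrix (Fin n) (Fin n) ℂ) (x y : Fin n → ℂ) :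
    frm C x y = x ⬝ᵥ C *ᵥ y := Matrix.toLinearMap₂'_apply' _ _ _

lemma frm_comb {n : ℕ} (C D : Matrix (Fin n) (Fin n) ℂ) (a b : ℂ) :
    frm (a • C + b • D) = a • frm C + b • frm D := by simp [frm]

lemma ker_form {n : ℕ} (C : Matrix (Fin n) (Fin n) ℂ) (hC : Cᵀ = -C) :
    Module.finrank ℂ (LinearMap.ker (frm C)) + C.rank = n := by
  have h1 : LinearMap.ker (frm C) = LinearMap.ker C.mulVecLin := by
    ext x
    simp only [LinearMap.mem_ker, Matrix.mulVecLin_apply]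
    have h2 : ∀ y, frm C x y = - ((C *ᵥ x) ⬝ᵥ y) := by
      intro y
      rw [frm_apply, Matrix.dotProduct_mulVec, ← Matrix.mulVec_transpose, hC,
        Matrix.neg_mulVec, neg_dotProduct]
    constructor
    · intro h
      apply dotProduct_eq_zero
      intro y
      have := h2 y
      rw [h] at this
      simpa using this.symm
    · intro h
      ext y
      simp [h2, h]
  rw [h1, Matrix.rank]
  have := LinearMap.finrank_range_add_finrank_ker C.mulVecLin
  simp at this
  omega

lemma alt_form {n : ℕ} (C : Matrix (Fin n) (Fin n) ℂ) (hC : Cᵀ = -C) (x : Fin n → ℂ) :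
    frm C x x = 0 := by
  have h : frm C x x = - frm C x x := by
    conv_lhs => rw [frm_apply, Matrix.dotProduct_mulVec, ← Matrix.mulVec_transpose, hC,
        Matrix.neg_mulVec, neg_dotProduct, dotProduct_comm]
    rw [frm_apply]
  exact self_eq_neg.1 h

lemma congr_entry {n : ℕ} (S C : Matrix (Fin n) (Fin n) ℂ) (p q : Fin n) :
    (S * C * Sᵀ) p q = frm C (S p) (S q) := by
  rw [frm_apply, Matrix.mul_assoc, Matrix.mul_apply']
  rfl

/-- Every 2-dimensional space of skew-symmetric `(N+1)×(N+1)` complex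
matrices of constant rank `2r` is congruent to a standard pencil `diag(F_λ, 0)` for
some partition `λ` of `r` of length `h`, padded by a zero block. -/
theorem stmt_5 (r N : ℕ) (hr : 1 ≤ r)
    (M : Submodule ℂ (Matrix (Fin (N+1)) (Fin (N+1)) ℂ))
    (hdim : Module.finrank ℂ M = 2)
    (hskew : ∀ A ∈ M, Aᵀ = -A)
    (hrank : ∀ A ∈ M, A ≠ 0 → A.rank = 2*r) :
    ∃ h : ℕ, ∃ _hle : 2*r + h ≤ N + 1, 1 ≤ h ∧ h ≤ r ∧
    ∃ rpart : Fin h → ℕ,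
      (∀ i, 1 ≤ rpart i) ∧
      (∀ i j, i ≤ j → rpart j ≤ rpart i) ∧
      (∑ i, rpart i = r) ∧
      ∃ S : Matrix (Fin (N+1)) (Fin (N+1)) ℂ, IsUnit S ∧
      ∃ A B, A ∈ M ∧ B ∈ M ∧ LinearIndependent ℂ ![A, B] ∧
        Submodule.span ℂ {A, B} = M ∧
        S * A * Sᵀ = Matrix.reindex (finSumFinEquiv.trans (finCongr (by omega)))
          (finSumFinEquiv.trans (finCongr (by omega)))
          (Matrix.fromBlocks (Fpencil rpart r 1 0) 0 0
            (0 : Matrix (Fin (N + 1 - (2*r + h))) (Fin (N + 1 - (2*r + h))) ℂ)) ∧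
        S * B * Sᵀ = Matrix.reindex (finSumFinEquiv.trans (finCongr (by omega)))
          (finSumFinEquiv.trans (finCongr (by omega)))
          (Matrix.fromBlocks (Fpencil rpart r 0 1) 0 0
            (0 : Matrix (Fin (N + 1 - (2*r + h))) (Fin (N + 1 - (2*r + h))) ℂ)) := by
  classical
  let bM := Module.finBasisOfFinrankEq ℂ M hdim
  set A : Matrix (Fin (N+1)) (Fin (N+1)) ℂ := (bM 0).1 with hAdef
  set B : Matrix (Fin (N+1)) (Fin (N+1)) ℂ := (bM 1).1 with hBdef
  have hAM : A ∈ M := (bM 0).2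
  have hBM : B ∈ M := (bM 1).2
  have hfun : ![A, B] = M.subtype ∘ bM := by
    funext i; fin_cases i <;> rfl
  have hli : LinearIndependent ℂ ![A, B] := by
    rw [hfun]; exact bM.linearIndependent.map' M.subtype (Submodule.ker_subtype M)
  have hspan : Submodule.span ℂ {A, B} = M := by
    have h1 : ({A, B} : Set (Matrix (Fin (N+1)) (Fin (N+1)) ℂ)) = Set.range ![A, B] := by
      simp [Matrix.range_cons, Set.pair_comm]
    rw [h1, hfun, Set.range_comp, Submodule.span_image, bM.span_eq]
    simp
  obtain ⟨ι, _, ρ0, e0, k0, hr0, hn0, hli0, hee0, hkk0, hek0⟩ := pencil (frm A) (frm B)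
    (alt_form A (hskew A hAM)) (alt_form B (hskew B hBM)) r (by
      intro a b hab
      rw [← frm_comb]
      have hm : a • A + b • B ∈ M := M.add_mem (M.smul_mem _ hAM) (M.smul_mem _ hBM)
      have h1 := ker_form _ (hskew _ hm)
      rw [hrank _ hm] at h1
      · simpa using h1
      · intro h
        exact hab (LinearIndependent.pair_iff.1 hli a b h))
  obtain ⟨m, σ, hσ⟩ := exists_sorted ρ0
  have hm : Fintype.card ι = m := by rw [← Fintype.card_congr σ, Fintype.card_fin]
  -- the extended sequence of block sizes
  let g : ℕ → ℕ := fun i => if hi : i < m then ρ0 (σ ⟨i, hi⟩) else 0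
  have hgσ : ∀ i : Fin m, g i = ρ0 (σ i) := fun i => by simp [g]
  have hganti : Antitone g := by
    intro i j hij
    simp only [g]
    split_ifs with h1 h2 h2
    · exact hσ (show (⟨i, h2⟩ : Fin m) ≤ ⟨j, h1⟩ from hij)
    · omega
    · omega
    · omega
  have hex : ∃ x, g x = 0 := ⟨m, by simp [g]⟩
  let h := Nat.find hex
  have hg0 : g h = 0 := Nat.find_spec hex
  have hgh : ∀ i, i < h ↔ 0 < g i := by
    intro i
    constructor
    · intro hi; exact Nat.pos_of_ne_zero (Nat.find_min hex hi)
    · intro hi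
      by_contra h1
      have := hganti (not_lt.1 h1)
      omega
  have hhm : h ≤ m := Nat.find_min' hex (by simp [g])
  let rpart : Fin h → ℕ := fun i => g i
  have hPs : ∀ i, partialSum rpart (i+1) = partialSum rpart i + g i := by
    intro i
    unfold partialSum
    rw [Finset.sum_range_succ]
    congr 1
    split_ifs with h1
    · rfl
    · have := (hgh i).not.1 h1; omega
  have hP0 : partialSum rpart 0 = 0 := by simp [partialSum]
  have hPsum : ∀ i, partialSum rpart i = ∑ j ∈ Finset.range i, g j := by
    intro i
    induction i with
    | zero => simp [hP0]
    | succ i ih => rw [hPs, ih, Finset.sum_range_succ]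
  have hmono : Monotone (partialSum rpart) := monotone_nat_of_le_succ fun i => by rw [hPs]; omega
  have hPm : partialSum rpart m = r := by
    rw [hPsum, Finset.sum_range, ← hr0, ← Equiv.sum_comp σ]
    exact Finset.sum_congr rfl fun i _ => hgσ i
  have hPh : ∑ i, rpart i = r := by
    have h1 : ∑ i, rpart i = partialSum rpart h := by
      rw [hPsum, Finset.sum_range]
    rw [h1]
    apply le_antisymm
    · rw [← hPm]; exact hmono hhm
    · rw [← hPm, hPsum, hPsum]
      rw [← Finset.sum_range_add_sum_Ico _ hhm]
      have : ∑ i ∈ Finset.Ico h m, g i = 0 := Finset.sum_eq_zero fun i hi => by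
        have h2 := (hgh i).not.1 (by simp at hi; omega)
        omega
      omega
  have hrp1 : ∀ i, 1 ≤ rpart i := fun i => (hgh i).1 i.2
  have hhr : h ≤ r := by
    rw [← hPh]
    calc h = ∑ i : Fin h, 1 := by simp
      _ ≤ _ := Finset.sum_le_sum fun i _ => hrp1 i
  have hh1 : 1 ≤ h := by
    by_contra h0
    have : h = 0 := by omega
    have h2 : ∑ i, rpart i = 0 := by
      apply Finset.sum_eq_zero
      intro i _
      have := i.2
      omega
    omega
  have hnm : 2 * r + m = N + 1 := by
    rw [Finset.sum_add_distrib, hr0] at hn0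
    simp at hn0
    omega
  have hle : 2 * r + h ≤ N + 1 := by omega
  -- positions
  let J := (Σ i : Fin m, Fin (g i)) ⊕ (Σ i : Fin m, Fin (g i + 1))
  let pos : J → ℕ := Sum.elim (fun x => partialSum rpart x.1 + x.2)
    (fun x => r + (partialSum rpart x.1 + x.1 + x.2))
  have hposl : ∀ x, pos (Sum.inl x) < r := by
    rintro ⟨i, s⟩
    have h1 : partialSum rpart (i + 1) ≤ partialSum rpart m := hmono i.2
    have := s.2
    rw [hPs] at h1
    simp only [pos, Sum.elim_inl]
    omega
  have hposr : ∀ x, r ≤ pos (Sum.inr x) := fun x => by simp [pos]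
  have hpos : ∀ x, pos x < N + 1 := by
    rintro (x | ⟨i, s⟩)
    · have := hposl x; omega
    · have h1 : partialSum rpart (i + 1) ≤ partialSum rpart m := hmono i.2
      have := s.2
      have := i.2
      rw [hPs] at h1
      simp only [pos, Sum.elim_inr]
      omega
  have hinj : Function.Injective (fun x : J => (⟨pos x, hpos x⟩ : Fin (N+1))) := by
    intro x y hxy
    have hxy : pos x = pos y := congrArg Fin.val hxy
    rcases x with x | x <;> rcases y with y | y
    · obtain ⟨i, s⟩ := x
      obtain ⟨j, t⟩ := y
      simp only [pos, Sum.elim_inl] at hxy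
      obtain ⟨h1, h2⟩ := (decode (partialSum rpart) g hPs s.2 t.2).1 hxy
      obtain rfl := Fin.ext h1
      rw [Fin.ext h2]
    · have := hposl x; have := hposr y; omega
    · have := hposl y; have := hposr x; omega
    · obtain ⟨i, s⟩ := x
      obtain ⟨j, t⟩ := y
      simp only [pos, Sum.elim_inr] at hxy
      obtain ⟨h1, h2⟩ := (decode (fun i => partialSum rpart i + i) (fun i => g i + 1)
        (fun i => by simp only [hPs]; omega) s.2 t.2).1 (by omega)
      obtain rfl := Fin.ext h1
      rw [Fin.ext h2]
  have hsumg : ∑ i : Fin m, g i = r := by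
    rw [← hPm, hPsum, Finset.sum_range]
  have hcard : Fintype.card J = Fintype.card (Fin (N+1)) := by
    simp only [J, Fintype.card_sum, Fintype.card_sigma, Fintype.card_fin, Finset.sum_add_distrib, hsumg]
    simp
    omega
  let φ : J ≃ Fin (N+1) := Equiv.ofBijective _ ((Fintype.bijective_iff_injective_and_card _).2 ⟨hinj, hcard⟩)
  have hφ : ∀ x, ((φ x : Fin (N+1)) : ℕ) = pos x := fun x => rfl
  -- vectors
  let vec : J → (Fin (N+1) → ℂ) := Sum.elim (fun x => e0 (σ x.1) x.2) (fun x => k0 (σ x.1) x.2)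
  have hvec : LinearIndependent ℂ vec := by
    let F : J → (Σ i, Fin (ρ0 i)) ⊕ (Σ i, Fin (ρ0 i + 1)) := Sum.map
      (fun x => ⟨σ x.1, x.2.1, by rw [← hgσ]; exact x.2.2⟩)
      (fun x => ⟨σ x.1, x.2.1, by rw [← hgσ]; exact x.2.2⟩)
    have hF : Function.Injective F := by
      apply Function.Injective.sumMap
      · rintro ⟨i, s⟩ ⟨j, t⟩ hxy
        simp only [Sigma.mk.injEq, EmbeddingLike.apply_eq_iff_eq] at hxy
        obtain ⟨rfl, h2⟩ := hxy
        simp at h2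
        rw [Fin.ext h2]
      · rintro ⟨i, s⟩ ⟨j, t⟩ hxy
        simp only [Sigma.mk.injEq, EmbeddingLike.apply_eq_iff_eq] at hxy
        obtain ⟨rfl, h2⟩ := hxy
        simp at h2
        rw [Fin.ext h2]
    refine li_congr (hli0.comp F hF) fun x => ?_
    rcases x with x | x <;> rfl
  let S : Matrix (Fin (N+1)) (Fin (N+1)) ℂ := Matrix.of fun p => vec (φ.symm p)
  have hS : ∀ x, S (φ x) = vec x := fun x => by
    show vec (φ.symm (φ x)) = vec x
    rw [Equiv.symm_apply_apply]
  have hSu : IsUnit S := by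
    rw [← Matrix.linearIndependent_rows_iff_isUnit]
    exact hvec.comp φ.symm φ.symm.injective
  have main : ∀ (C : Matrix (Fin (N+1)) (Fin (N+1)) ℂ) (a b : ℂ), Cᵀ = - C →
      (∀ i s j t, s < ρ0 i → t < ρ0 j → frm C (e0 i s) (e0 j t) = 0) →
      (∀ i s j t, frm C (k0 i s) (k0 j t) = 0) →
      (∀ i s j t, s < ρ0 i → t < ρ0 j + 1 → frm C (e0 i s) (k0 j t) =
        if i = j ∧ s = t then a else if i = j ∧ s + 1 = t then b else 0) →
      ∀ p q : Fin (N+1), (S * C * Sᵀ) p q = penNat rpart r a b p q := by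
    intro C a b hC h1 h2 h3 p q
    obtain ⟨x, rfl⟩ := φ.surjective p
    obtain ⟨y, rfl⟩ := φ.surjective q
    have hsk : ∀ x y, frm C x y = - frm C y x := fun x y => by
      have := alt_form C hC (x + y)
      simp [alt_form C hC] at this
      exact eq_neg_of_add_eq_zero_left this
    have hmix : ∀ x y, frm C (vec (Sum.inl x)) (vec (Sum.inr y)) =
        fbNat rpart a b (pos (Sum.inl x)) (pos (Sum.inr y) - r) := by
      rintro ⟨i, s⟩ ⟨j, t⟩
      simp only [pos, vec, Sum.elim_inl, Sum.elim_inr, Nat.add_sub_cancel_left]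
      rw [fbNat_eq rpart g hgh hPs a b i j s t s.2 t.2,
        h3 _ _ _ _ (by rw [← hgσ]; exact s.2) (by rw [← hgσ]; exact t.2)]
      simp only [EmbeddingLike.apply_eq_iff_eq, Fin.ext_iff]
    rw [congr_entry, hS, hS, hφ, hφ]
    unfold penNat
    rcases x with x | x <;> rcases y with y | y
    · rw [if_pos (hposl x), if_neg (not_le.2 (hposl y))]
      exact h1 _ _ _ _ (by rw [← hgσ]; exact x.2.2) (by rw [← hgσ]; exact y.2.2)
    · rw [if_pos (hposl x), if_pos (hposr y), hmix]
    · rw [if_neg (not_lt.2 (hposr x)), if_pos (hposl y), hsk, hmix]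
    · rw [if_neg (not_lt.2 (hposr x)), if_neg (not_lt.2 (hposr y))]
      exact h2 _ _ _ _
  refine ⟨h, hle, hh1, hhr, rpart, hrp1, fun i j hij => hganti hij, hPh, S, hSu, A, B, hAM, hBM,
    hli, hspan, ?_, ?_⟩
  · ext p q
    rw [target_apply]
    refine main A 1 0 (hskew A hAM) (fun i s j t hs ht => (hee0 i s j t hs ht).1)
      (fun i s j t => (hkk0 i s j t).1) (fun i s j t hs ht => ?_) p q
    rw [(hek0 i s j t hs ht).1]
    simp
  · ext p q
    rw [target_apply]
    refine main B 0 1 (hskew B hBM) (fun i s j t hs ht => (hee0 i s j t hs ht).2)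
      (fun i s j t => (hkk0 i s j t).2) (fun i s j t hs ht => ?_) p q
    rw [(hek0 i s j t hs ht).2]
    by_cases h5 : i = j ∧ s = t
    · rw [if_pos h5, if_neg]; omega
    · rw [if_neg h5]
end

section
/- Let r ≥ 1, d ≥ 0, and let M be a (d+1)-dimensional linear subspace of the space of skew-symmetric n×n complex matrices such that every nonzero matrix in M has rank 2r, where n ≥ 2r + d. Then there exists a (2r+d)×n complex matrix P of rank 2r+d such that for every nonzero A ∈ M the matrix P A Pᵀ has rank 2r. In particular, M can be isomorphically projected to a (d+1)-dimensional space of skew-symmetric (2r+d)×(2r+d) matrices of constant rank 2r. -/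
open Matrix

lemma core_avoid (d k n : ℕ) (h : k + d < n)
    (L : (Fin (d+1) → ℂ) →ₗ[ℂ] Matrix (Fin n) (Fin n) ℂ)
    (hL : ∀ c, c ≠ 0 → (L c).rank = k) :
    ∃ v : Fin n → ℂ, ∀ c, c ≠ 0 → ∀ x, (L c) *ᵥ x ≠ v := by
  let F : (Fin (d+1) × (Fin k → Fin n)) → ((Fin d → ℂ) × (Fin k → ℂ)) → (Fin n → ℂ) :=
    fun p q => ∑ j, q.2 j • (L (p.1.insertNth 1 q.1)).col (p.2 j)
  have hF : ∀ p, ContDiff ℝ 1 (F p) := by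
    intro p
    have h1 : ContDiff ℝ 1 (fun q : ((Fin d → ℂ) × (Fin k → ℂ)) =>
        (p.1.insertNth (1:ℂ) q.1 : Fin (d+1) → ℂ)) := by
      rw [contDiff_pi]
      intro i
      refine Fin.succAboveCases p.1 ?_ ?_ i
      · simp only [Fin.insertNth_apply_same]
        exact contDiff_const
      · intro j
        simp only [Fin.insertNth_apply_succAbove]
        fun_prop
    have h2 : ∀ a b, ContDiff ℝ 1 (fun c : (Fin (d+1) → ℂ) => L c a b) := by
      intro a b
      let l : (Fin (d+1) → ℂ) →ₗ[ℝ] ℂ :=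
        { toFun := fun c => L c a b
          map_add' := by intro x y; simp
          map_smul' := by
            intro t x
            have : t • x = (t : ℂ) • x := by ext; simp
            rw [this, map_smul]; simp }
      exact (LinearMap.toContinuousLinearMap l).contDiff
    rw [contDiff_pi]
    intro i
    simp only [F, Finset.sum_apply, Pi.smul_apply, Matrix.col_apply, smul_eq_mul]
    refine ContDiff.sum fun j _ => ContDiff.mul (by fun_prop) ?_
    exact (h2 i (p.2 j)).comp h1
  have hdim : dimH (⋃ p, Set.range (F p)) < Module.finrank ℝ (Fin n → ℂ) := by
    rw [dimH_iUnion]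
    refine lt_of_le_of_lt (iSup_le fun p => (hF p).dimH_range_le) ?_
    rw [Nat.cast_lt]
    simp only [Module.finrank_prod, Module.finrank_pi_fintype, Complex.finrank_real_complex]
    simp
    omega
  obtain ⟨v, hv⟩ := (dense_compl_of_dimH_lt_finrank hdim).nonempty
  refine ⟨v, fun c hc x hx => hv ?_⟩
  obtain ⟨i, hi⟩ : ∃ i, c i ≠ 0 := by
    by_contra! hh; exact hc (funext hh)
  have hc' : (c i)⁻¹ • c ≠ 0 := smul_ne_zero (inv_ne_zero hi) hc
  have hr := hL _ hc'
  rw [Matrix.rank_eq_finrank_span_cols] at hr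
  have hex := Submodule.exists_fun_fin_finrank_span_eq ℂ
    (Set.range (L ((c i)⁻¹ • c)).col)
  rw [hr] at hex
  obtain ⟨f, hf1, hf2, -⟩ := hex
  choose s hs using hf1
  have hmem : v ∈ Submodule.span ℂ (Set.range f) := by
    rw [hf2, ← Matrix.range_mulVecLin]
    refine ⟨c i • x, ?_⟩
    rw [Matrix.mulVecLin_apply, map_smul, Matrix.mulVec_smul, Matrix.smul_mulVec, smul_smul,
      mul_inv_cancel₀ hi, one_smul, hx]
  obtain ⟨g, hg⟩ := (Submodule.mem_span_range_iff_exists_fun ℂ).1 hmem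
  rw [Set.mem_iUnion]
  refine ⟨(i, s), (i.removeNth ((c i)⁻¹ • c), g), ?_⟩
  have hins : (i.insertNth (1:ℂ) (i.removeNth ((c i)⁻¹ • c)) : Fin (d+1) → ℂ) = (c i)⁻¹ • c := by
    have h1 : (1:ℂ) = ((c i)⁻¹ • c) i := by simp [hi]
    rw [h1]
    exact Fin.insertNth_self_removeNth i _
  simp only [F]
  rw [hins, ← hg]
  exact Finset.sum_congr rfl fun j _ => by rw [hs]

lemma rank_mul_inj {a b e : ℕ} (Q : Matrix (Fin a) (Fin b) ℂ) (B : Matrix (Fin b) (Fin e) ℂ)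
    (h : ∀ x, Q *ᵥ (B *ᵥ x) = 0 → B *ᵥ x = 0) : (Q * B).rank = B.rank := by
  have hk : LinearMap.ker (Q * B).mulVecLin = LinearMap.ker B.mulVecLin := by
    ext x
    simp only [LinearMap.mem_ker, Matrix.mulVecLin_apply, ← Matrix.mulVec_mulVec]
    exact ⟨h x, fun hx => by rw [hx]; simp⟩
  have h1 := LinearMap.finrank_range_add_finrank_ker (Q * B).mulVecLin
  have h2 := LinearMap.finrank_range_add_finrank_ker B.mulVecLin
  rw [hk] at h1
  unfold Matrix.rank
  omega

lemma exists_proj (m : ℕ) (v : Fin (m+1) → ℂ) (hv : v ≠ 0) :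
    ∃ Q : Matrix (Fin m) (Fin (m+1)) ℂ, Function.Surjective Q.mulVecLin ∧
      ∀ y, Q *ᵥ y = 0 → ∃ t : ℂ, t • v = y := by
  have h1 : Module.finrank ℂ ((Fin (m+1) → ℂ) ⧸ (ℂ ∙ v)) = m := by
    have := Submodule.finrank_quotient_add_finrank (ℂ ∙ v)
    rw [finrank_span_singleton hv] at this
    simp at this
    omega
  let e : ((Fin (m+1) → ℂ) ⧸ (ℂ ∙ v)) ≃ₗ[ℂ] (Fin m → ℂ) :=
    LinearEquiv.ofFinrankEq _ _ (by simp [h1])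
  let f := e.toLinearMap ∘ₗ (ℂ ∙ v).mkQ
  have hf : (LinearMap.toMatrix' f).mulVecLin = f := by
    rw [← Matrix.toLin'_apply', Matrix.toLin'_toMatrix']
  refine ⟨LinearMap.toMatrix' f, ?_, ?_⟩
  · rw [hf]
    exact e.surjective.comp (Submodule.mkQ_surjective _)
  · intro y hy
    rw [← Matrix.mulVecLin_apply, hf] at hy
    have : (ℂ ∙ v).mkQ y = 0 := by simpa [f] using hy
    rw [Submodule.mkQ_apply, Submodule.Quotient.mk_eq_zero] at this
    exact Submodule.mem_span_singleton.1 this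

lemma proj_step (r d n : ℕ) 
    (M : Submodule ℂ (Matrix (Fin n) (Fin n) ℂ))
    (hdim : Module.finrank ℂ M = d + 1)
    (hskew : ∀ A ∈ M, Aᵀ = -A) (m : ℕ) (hm : 2*r + d < m + 1)
    (P : Matrix (Fin (m+1)) (Fin n) ℂ) (hP : Function.Surjective P.mulVecLin)
    (hrank : ∀ A ∈ M, A ≠ 0 → (P * A * Pᵀ).rank = 2*r) :
    ∃ P : Matrix (Fin m) (Fin n) ℂ, Function.Surjective P.mulVecLin ∧
      ∀ A ∈ M, A ≠ 0 → (P * A * Pᵀ).rank = 2*r := by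
  let e : (Fin (d+1) → ℂ) ≃ₗ[ℂ] M := LinearEquiv.ofFinrankEq _ _ (by simp [hdim])
  let L : (Fin (d+1) → ℂ) →ₗ[ℂ] Matrix (Fin (m+1)) (Fin (m+1)) ℂ :=
    { toFun := fun c => P * (e c : Matrix (Fin n) (Fin n) ℂ) * Pᵀ
      map_add' := by intro x y; simp [Matrix.mul_add, Matrix.add_mul]
      map_smul' := by intro x y; simp }
  obtain ⟨v, hv⟩ := core_avoid d (2*r) (m+1) hm L (fun c hc => hrank _ (e c).2 (by simpa using hc))
  have hv' : ∀ A ∈ M, A ≠ 0 → ∀ x, (P * A * Pᵀ) *ᵥ x ≠ v := by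
    intro A hA hA0 x
    have := hv (e.symm ⟨A, hA⟩) (by simpa using hA0) x
    simpa [L] using this
  have hv0 : v ≠ 0 := by
    intro h0
    refine hv 1 one_ne_zero 0 ?_
    simp [h0]
  obtain ⟨Q, hQ, hQk⟩ := exists_proj m v hv0
  refine ⟨Q * P, ?_, ?_⟩
  · rw [Matrix.mulVecLin_mul]
    exact hQ.comp hP
  · intro A hA hA0
    set B := P * A * Pᵀ with hB
    have key : ∀ x, Q *ᵥ (B *ᵥ x) = 0 → B *ᵥ x = 0 := by
      intro x hx
      obtain ⟨t, ht⟩ := hQk _ hx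
      by_cases h0 : t = 0
      · rw [← ht, h0, zero_smul]
      · exfalso
        refine hv' A hA hA0 (t⁻¹ • x) ?_
        rw [← hB, Matrix.mulVec_smul, ← ht, smul_smul, inv_mul_cancel₀ h0, one_smul]
    have hBs : Bᵀ = -B := by
      simp [hB, Matrix.transpose_mul, hskew A hA, Matrix.mul_assoc]
    have h1 : (Q * B).rank = 2*r := (rank_mul_inj Q B key).trans (hrank A hA hA0)
    have h2 : (B * Qᵀ).rank = 2*r := by
      rw [← Matrix.rank_transpose, Matrix.transpose_mul, Matrix.transpose_transpose, hBs,
        ← h1, Matrix.mul_neg, ← Matrix.neg_mul]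
      refine (rank_mul_inj (-Q) B ?_).trans (rank_mul_inj Q B key).symm
      intro x hx
      exact key x (by simpa [Matrix.neg_mulVec] using hx)
    have h3 : Q * P * A * (Q * P)ᵀ = Q * (B * Qᵀ) := by
      simp [hB, Matrix.transpose_mul, Matrix.mul_assoc]
    rw [h3, ← h2]
    refine rank_mul_inj _ _ ?_
    intro x
    rw [← Matrix.mulVec_mulVec]
    exact key _

/-- A `(d+1)`-dimensional space of skew-symmetric `n×n` complex matrices
of constant rank `2r` (with `n ≥ 2r+d`) can be isomorphically projected to a space of
skew-symmetric `(2r+d)×(2r+d)` matrices of constant rank `2r`. -/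
theorem stmt_11 (r d n : ℕ) (hr : 1 ≤ r) (hn : 2*r + d ≤ n)
    (M : Submodule ℂ (Matrix (Fin n) (Fin n) ℂ))
    (hdim : Module.finrank ℂ M = d + 1)
    (hskew : ∀ A ∈ M, Aᵀ = -A)
    (hrank : ∀ A ∈ M, A ≠ 0 → A.rank = 2*r) :
    ∃ P : Matrix (Fin (2*r + d)) (Fin n) ℂ, P.rank = 2*r + d ∧
      (∀ A ∈ M, A ≠ 0 → (P * A * Pᵀ).rank = 2*r) ∧
      (∀ A ∈ M, ∀ B ∈ M, P * A * Pᵀ = P * B * Pᵀ → A = B) := by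
  have main : ∃ P : Matrix (Fin (2*r + d)) (Fin n) ℂ, Function.Surjective P.mulVecLin ∧
      ∀ A ∈ M, A ≠ 0 → (P * A * Pᵀ).rank = 2*r := by
    refine Nat.decreasingInduction' (n := n) (m := 2*r+d)
      (P := fun m => ∃ P : Matrix (Fin m) (Fin n) ℂ, Function.Surjective P.mulVecLin ∧
      ∀ A ∈ M, A ≠ 0 → (P * A * Pᵀ).rank = 2*r) ?_ hn ?_
    · rintro m - hm ⟨P, hP, hPr⟩
      exact proj_step r d n M hdim hskew m (by omega) P hP hPr
    · refine ⟨1, ?_, ?_⟩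
      · intro x; exact ⟨x, by simp⟩
      · intro A hA hA0
        simpa using hrank A hA hA0
  obtain ⟨P, hP, hPr⟩ := main
  refine ⟨P, ?_, hPr, ?_⟩
  · unfold Matrix.rank
    rw [LinearMap.range_eq_top.2 hP]
    simp
  · intro A hA B hB hAB
    by_contra hne
    have := hPr (A - B) (M.sub_mem hA hB) (sub_ne_zero.2 hne)
    rw [Matrix.mul_sub, Matrix.sub_mul, hAB, sub_self, Matrix.rank_zero] at this
    omega
end
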